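/- arXiv:1601.01650 — 2 statements merged into one kernel-verified Lean document; each statement's English description precedes it below -/
import Mathlib

section
/- Fix real α, β > −1, j ∈ ℕ, γ ∈ ℝ, M > 0, and a sequence M_n ≥ 0 with lim_{n→∞} M_n n^γ = M. Suppose γ < 2(α+2j+1). Let (b_0, …, b_{j+1}) be the unique solution of the triangular linear system Σ_{k=0}^{i} b_k·C(i,k)·(−1)^k·k!·2^k·Γ(α+i+1)/Γ(α+i+k+1) = (i−j)/(α+j+i+1) for i = 0, 1, …, j+1, where C(i,k) is the binomial coefficient. Then lim_{n→∞} Q_n(1 − z²/(2n²))/n^α = Σ_{i=0}^{j+1} b_i·2^i·(z/2)^{2i}·g_{α+2i}(z), uniformly on compact subsets of ℂ. -/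
open Polynomial Filter

/-- The Jacobi polynomial `P_n^{(α,β)}` as a real polynomial. -/
noncomputable def jacobiP (α β : ℝ) (n : ℕ) : Polynomial ℝ :=
  ∑ k ∈ Finset.range (n + 1),
    Polynomial.C (Real.Gamma (n + α + 1) / (Real.Gamma ((n : ℝ) - k + 1) * Real.Gamma (α + k + 1)) *
        (Real.Gamma (n + β + 1) / (Real.Gamma ((k : ℝ) + 1) * Real.Gamma ((n : ℝ) - k + β + 1)))) *
      (Polynomial.C (2⁻¹ : ℝ) * (Polynomial.X - 1)) ^ k *
      (Polynomial.C (2⁻¹ : ℝ) * (Polynomial.X + 1)) ^ (n - k)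

/-- The squared Jacobi norm `‖P_n^{(α,β)}‖²`. -/
noncomputable def jacobiNormSq (α β : ℝ) (n : ℕ) : ℝ :=
  ∫ x in (-1 : ℝ)..1, (jacobiP α β n).eval x ^ 2 * (1 - x) ^ α * (1 + x) ^ β

/-- The kernel `K_n^{(j,k)}(x,y)`. -/
noncomputable def kernK (α β : ℝ) (j k n : ℕ) (x y : ℝ) : ℝ :=
  ∑ i ∈ Finset.range (n + 1),
    (Polynomial.derivative^[j] (jacobiP α β i)).eval x *
      (Polynomial.derivative^[k] (jacobiP α β i)).eval y / jacobiNormSq α β i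

/-- The kernel `K_n^{(j,0)}(1,·)` as a polynomial. -/
noncomputable def kernKPoly (α β : ℝ) (j n : ℕ) : Polynomial ℝ :=
  ∑ i ∈ Finset.range (n + 1),
    Polynomial.C ((Polynomial.derivative^[j] (jacobiP α β i)).eval 1 / jacobiNormSq α β i) *
      jacobiP α β i

/-- The varying Sobolev inner product `(f,g)_{S,n}` with mass `m`. -/
noncomputable def sobInner (α β : ℝ) (j : ℕ) (m : ℝ) (f g : Polynomial ℝ) : ℝ :=
  (∫ x in (-1 : ℝ)..1, f.eval x * g.eval x * (1 - x) ^ α * (1 + x) ^ β) +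
    m * (Polynomial.derivative^[j] f).eval 1 * (Polynomial.derivative^[j] g).eval 1

/-- The Jacobi–Sobolev orthogonal polynomial `Q_n`. -/
noncomputable def sobQ (α β : ℝ) (j : ℕ) (Ms : ℕ → ℝ) (n : ℕ) : Polynomial ℝ :=
  jacobiP α β n -
    Polynomial.C (Ms n * (Polynomial.derivative^[j] (jacobiP α β n)).eval 1 /
        (1 + Ms n * kernK α β j j (n - 1) 1 1)) *
      kernKPoly α β j (n - 1)

/-- The entire function `g_ν(z) = ∑ (-1)^k (z/2)^{2k}/(k! Γ(k+ν+1))`, so that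
`J_ν(x) = (x/2)^ν g_ν(x)`. -/
noncomputable def besselG (ν : ℝ) (z : ℂ) : ℂ :=
  ∑' k : ℕ, (-1) ^ k / ((Nat.factorial k : ℂ) * Complex.Gamma ((k : ℂ) + (ν : ℂ) + 1)) *
    (z / 2) ^ (2 * k)


/-- Rising factorial as a product. -/
noncomputable def rfac (x : ℝ) (k : ℕ) : ℝ := ∏ l ∈ Finset.range k, (x + l)

lemma gamma_rfac (s : ℝ) (hs : 0 < s) (k : ℕ) :
    Real.Gamma (s + k) = rfac s k * Real.Gamma s := by
  induction k with
  | zero => simp [rfac]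
  | succ k ih =>
    have h : s + k ≠ 0 := by positivity
    rw [Nat.cast_succ, ← add_assoc, Real.Gamma_add_one h, ih, rfac, rfac, Finset.prod_range_succ]
    ring

lemma rfac_choose (x : ℝ) (k : ℕ) : rfac x k = k.factorial * Ring.choose (x + k - 1) k := by
  have h := Ring.factorial_nsmul_multichoose_eq_ascPochhammer x k
  rw [Ring.choose, show x + k - 1 - k + 1 = x by ring]
  rw [nsmul_eq_mul] at h
  rw [h, Polynomial.ascPochhammer_smeval_eq_eval]
  clear h
  induction k with
  | zero => simp [rfac]
  | succ k ih => 
    rw [ascPochhammer_succ_right, rfac, Finset.prod_range_succ, ← rfac, ih]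
    simp

/-- Chu-Vandermonde. -/
lemma rfac_vandermonde (x y : ℝ) (i : ℕ) :
    ∑ k ∈ Finset.range (i + 1), rfac (x + k) (i - k) / (i - k).factorial *
      (rfac (y - k) k / k.factorial) = rfac (x + y - 1) i / i.factorial := by
  have h := Ring.add_choose_eq (r := y - 1) (s := x + i - 1) i (Commute.all _ _)
  rw [Finset.Nat.sum_antidiagonal_eq_sum_range_succ_mk] at h
  rw [rfac_choose (x+y-1) i, mul_div_cancel_left₀ _ (by positivity), 
    show x + y - 1 + i - 1 = y - 1 + (x + i - 1) by ring, h]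
  apply Finset.sum_congr rfl
  intro k hk
  have hk' : k ≤ i := by simpa [Nat.lt_succ_iff] using hk
  rw [rfac_choose, rfac_choose, mul_div_cancel_left₀ _ (by positivity), 
    mul_div_cancel_left₀ _ (by positivity)]
  push_cast [hk']
  rw [show x + k + (i - k) - 1 = x + i - 1 by ring, show y - k + k - 1 = y - 1 by ring, mul_comm]

/-- The coefficients of `P_m` in powers of `(x-1)/2`. -/
noncomputable def cf (α β : ℝ) (i m : ℕ) : ℝ :=
  Real.Gamma (m + α + 1) / m.factorial * m.descFactorial i * rfac (m + α + β + 1) i /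
    (i.factorial * Real.Gamma (α + i + 1))

/-- The Bernstein type coefficients. -/
noncomputable def jc (α β : ℝ) (n k : ℕ) : ℝ :=
  Real.Gamma (n + α + 1) / (Real.Gamma ((n : ℝ) - k + 1) * Real.Gamma (α + k + 1)) *
        (Real.Gamma (n + β + 1) / (Real.Gamma ((k : ℝ) + 1) * Real.Gamma ((n : ℝ) - k + β + 1)))

lemma jc_mul_choose (α β : ℝ) (hα : -1 < α) (hβ : -1 < β) (m i k : ℕ) (hk : k ≤ i) (hi : i ≤ m) :
    jc α β m k * (m - k).choose (i - k) =
      Real.Gamma (m + α + 1) / ((m - i).factorial * Real.Gamma (α + i + 1)) *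
      (rfac (α + 1 + k) (i - k) / (i - k).factorial * (rfac (m + β + 1 - k) k / k.factorial)) := by
  have h1 : Real.Gamma ((m : ℝ) - k + 1) = (m - k).factorial := by
    rw [← Real.Gamma_nat_eq_factorial]; push_cast [hk.trans hi]; rfl
  have h2 : Real.Gamma ((k : ℝ) + 1) = k.factorial := Real.Gamma_nat_eq_factorial k
  have hkm : (k : ℝ) ≤ m := by exact_mod_cast hk.trans hi
  have hk0 : (0 : ℝ) ≤ k := by positivity
  have h3 : Real.Gamma (m + β + 1) = rfac (m + β + 1 - k) k * Real.Gamma ((m : ℝ) - k + β + 1) := by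
    rw [show (m : ℝ) - k + β + 1 = m + β + 1 - k by ring, ← gamma_rfac _ (by linarith)]
    congr 1; ring
  have h4 : Real.Gamma (α + i + 1) = rfac (α + 1 + k) (i - k) * Real.Gamma (α + k + 1) := by
    rw [show α + k + 1 = α + 1 + k by ring, ← gamma_rfac _ (by linarith)]
    congr 1; push_cast [hk]; ring
  have p1 : 0 < Real.Gamma ((m : ℝ) - k + β + 1) := Real.Gamma_pos_of_pos (by linarith)
  have p2 : 0 < Real.Gamma (α + k + 1) := Real.Gamma_pos_of_pos (by linarith)
  have p3 : 0 < Real.Gamma (α + i + 1) := Real.Gamma_pos_of_pos 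
    (by have : (0:ℝ) ≤ i := by positivity
        linarith)
  have p4 : rfac (α + 1 + k) (i - k) ≠ 0 := by
    intro h; rw [h] at h4; simp at h4; exact p3.ne' h4
  have h5 : ((m - k).choose (i - k) : ℝ) = (m-k).factorial / ((i - k).factorial * (m - i).factorial) := by
    rw [Nat.cast_choose ℝ (by omega)]
    congr 4; omega
  rw [jc, h1, h2, h3, h4, h5]
  field_simp

lemma sum_jc (α β : ℝ) (hα : -1 < α) (hβ : -1 < β) (m i : ℕ) (hi : i ≤ m) :
    ∑ k ∈ Finset.range (i + 1), jc α β m k * (m - k).choose (i - k) = cf α β i m := by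
  rw [Finset.sum_congr rfl (fun k hk => jc_mul_choose α β hα hβ m i k
    (by simpa [Nat.lt_succ_iff] using hk) hi), ← Finset.mul_sum, rfac_vandermonde, cf]
  have : (m.descFactorial i : ℝ) = m.factorial / (m - i).factorial := by
    rw [eq_div_iff (by positivity)]
    rw [mul_comm]; exact_mod_cast Nat.factorial_mul_descFactorial hi
  have p3 : 0 < Real.Gamma (α + i + 1) := Real.Gamma_pos_of_pos 
    (by have : (0:ℝ) ≤ i := by positivity
        linarith)
  rw [this, show α + 1 + (m + β + 1) - 1 = m + α + β + 1 by ring]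
  field_simp

lemma bern_expand {R : Type*} [CommRing R] (t : R) (m : ℕ) (c : ℕ → R) :
    ∑ k ∈ Finset.range (m + 1), c k * t ^ k * (t + 1) ^ (m - k) =
    ∑ i ∈ Finset.range (m + 1), (∑ k ∈ Finset.range (i + 1), c k * (m - k).choose (i - k)) * t ^ i := by
  have h : ∀ k ∈ Finset.range (m + 1), c k * t ^ k * (t + 1) ^ (m - k) = 
      ∑ i ∈ Finset.Ico k (m + 1), c k * (m - k).choose (i - k) * t ^ i := by
    intro k hk
    have hk' : k ≤ m := by simpa [Nat.lt_succ_iff] using hk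
    rw [add_pow, Finset.sum_Ico_eq_sum_range, Finset.mul_sum, show m + 1 - k = m - k + 1 by omega]
    apply Finset.sum_congr rfl
    intro i _
    simp [pow_add]; ring
  rw [Finset.sum_congr rfl h]
  simp_rw [Finset.sum_mul]
  apply Finset.sum_comm'
  intro x y
  simp only [Finset.mem_range, Finset.mem_Ico]
  omega

lemma jacobiP_expand (α β : ℝ) (hα : -1 < α) (hβ : -1 < β) (m : ℕ) :
    jacobiP α β m = ∑ i ∈ Finset.range (m + 1), C (cf α β i m) * (C (2⁻¹ : ℝ) * (X - 1)) ^ i := by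
  have h : (C (2⁻¹ : ℝ) * (X + 1)) = C (2⁻¹ : ℝ) * (X - 1) + 1 := by
    have : (1 : ℝ[X]) = C (2⁻¹ * 2 : ℝ) := by norm_num
    have h2 : (C (2:ℝ)) = 2 := map_ofNat C 2
    rw [C_mul, h2] at this
    linear_combination -this
  rw [jacobiP, h]
  refine (bern_expand (C (2⁻¹ : ℝ) * (X - 1)) m (fun k => C (jc α β m k))).trans ?_
  apply Finset.sum_congr rfl
  intro i hi
  rw [← sum_jc α β hα hβ m i (by simpa [Nat.lt_succ_iff] using hi)]
  simp

lemma deriv_jacobiP (α β : ℝ) (hα : -1 < α) (hβ : -1 < β) (m j : ℕ) :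
    (derivative^[j] (jacobiP α β m)).eval 1 = cf α β j m * (j.factorial / 2 ^ j) := by
  rw [jacobiP_expand α β hα hβ, iterate_derivative_sum, eval_finsetSum]
  have h : ∀ i, (derivative^[j] (C (cf α β i m) * (C (2⁻¹ : ℝ) * (X - 1)) ^ i)).eval 1 = 
      if i = j then cf α β j m * (j.factorial / 2 ^ j) else 0 := by
    intro i
    rw [mul_pow, ← C_pow, ← mul_assoc, ← C_mul, iterate_derivative_C_mul, 
      show (X - 1 : ℝ[X]) = X - C 1 by simp, iterate_derivative_X_sub_pow]
    split_ifs with hij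
    · subst hij; simp [Nat.descFactorial_self]; ring
    · rcases lt_or_gt_of_ne hij with h | h
      · simp [Nat.descFactorial_of_lt h]
      · simp; right; right; omega
  rw [Finset.sum_congr rfl (fun i _ => h i), Finset.sum_ite_eq']
  split_ifs with h1
  · rfl
  · have : m < j := by simpa using h1
    simp [cf, Nat.descFactorial_of_lt this]

lemma rfac_eq_eval (x : ℝ) (k : ℕ) : rfac x k = (ascPochhammer ℝ k).eval x := by
  induction k with
  | zero => simp [rfac]
  | succ k ih => 
    rw [ascPochhammer_succ_right, rfac, Finset.prod_range_succ, ← rfac, ih]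
    simp

lemma sum_diff (x : ℝ) (m i : ℕ) (hi : i ≤ m) :
    ∑ k ∈ Finset.range (m + 1), (-1 : ℝ) ^ k * m.choose k * rfac (x + k) i = 
      if i = m then (-1 : ℝ) ^ m * m.factorial else 0 := by
  have h := fwdDiff_iter_eq_sum_shift (1 : ℝ) (ascPochhammer ℝ i).eval m x
  have h2 : ∑ k ∈ Finset.range (m + 1), (-1 : ℝ) ^ k * m.choose k * rfac (x + k) i = 
      (-1) ^ m * (fwdDiff (1:ℝ))^[m] (ascPochhammer ℝ i).eval x := by
    rw [h, Finset.mul_sum]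
    apply Finset.sum_congr rfl
    intro k hk
    have hk' : k ≤ m := by simpa [Nat.lt_succ_iff] using hk
    rw [rfac_eq_eval, zsmul_eq_mul]
    push_cast
    have : (-1 : ℝ) ^ m * (-1) ^ (m - k) = (-1) ^ k := by
      rw [← pow_add, show m + (m - k) = 2 * (m - k) + k by omega, pow_add, pow_mul]; simp
    rw [← mul_assoc, ← mul_assoc, this]
    simp
  rw [h2]
  split_ifs with hh
  · subst hh
    have := Polynomial.fwdDiff_iter_degree_eq_factorial (ascPochhammer ℝ i)
    rw [ascPochhammer_natDegree, (monic_ascPochhammer ℝ i).leadingCoeff] at this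
    rw [this]; simp
  · rw [Polynomial.fwdDiff_iter_eq_zero_of_degree_lt (by rw [ascPochhammer_natDegree]; omega)]
    simp

lemma beta_real (a b : ℝ) (ha : 0 < a) (hb : 0 < b) :
    IntervalIntegrable (fun x : ℝ => x ^ (a - 1) * (1 - x) ^ (b - 1)) MeasureTheory.volume 0 1 ∧
    ∫ x in (0:ℝ)..1, x ^ (a - 1) * (1 - x) ^ (b - 1) = 
      Real.Gamma a * Real.Gamma b / Real.Gamma (a + b) := by
  have hc := Complex.betaIntegral_convergent (u := a) (v := b) (by simpa) (by simpa)
  have he : ∀ x ∈ Set.uIoc (0:ℝ) 1, (x:ℂ) ^ ((a:ℂ) - 1) * (1 - (x:ℂ)) ^ ((b:ℂ) - 1) = 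
      ((x ^ (a - 1) * (1 - x) ^ (b - 1) : ℝ) : ℂ) := by
    intro x hx
    rw [Set.uIoc_of_le zero_le_one] at hx
    rw [Complex.ofReal_mul, Complex.ofReal_cpow hx.1.le, Complex.ofReal_cpow (by linarith [hx.2])]
    push_cast; rfl
  have hi : IntervalIntegrable (fun x : ℝ => ((x ^ (a - 1) * (1 - x) ^ (b - 1) : ℝ) : ℂ)) 
      MeasureTheory.volume 0 1 := hc.congr he
  constructor
  · rw [intervalIntegrable_iff] at hi ⊢
    exact hi.re
  · have h1 := ProbabilityTheory.beta_eq_betaIntegralReal a b ha hb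
    rw [ProbabilityTheory.beta] at h1
    rw [h1, Complex.betaIntegral, intervalIntegral.integral_congr_ae 
      (g := fun x : ℝ => ((x ^ (a - 1) * (1 - x) ^ (b - 1) : ℝ) : ℂ)) 
      (Filter.Eventually.of_forall he), intervalIntegral.integral_ofReal, Complex.ofReal_re]

lemma eval_jacobiP_bern (α β : ℝ) (m : ℕ) (t : ℝ) :
    (jacobiP α β m).eval (1 - 2 * t) = 
      ∑ k ∈ Finset.range (m + 1), jc α β m k * (-1) ^ k * t ^ k * (1 - t) ^ (m - k) := by
  rw [jacobiP, eval_finsetSum]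
  apply Finset.sum_congr rfl
  intro k _
  simp only [eval_mul, eval_C, eval_pow, eval_sub, eval_add, eval_X, eval_one]
  rw [show (2⁻¹ : ℝ) * (1 - 2 * t - 1) = -1 * t by ring, 
    show (2⁻¹ : ℝ) * (1 - 2 * t + 1) = 1 - t by ring, mul_pow, jc]
  ring

lemma eval_jacobiP_cf (α β : ℝ) (hα : -1 < α) (hβ : -1 < β) (m : ℕ) (t : ℝ) :
    (jacobiP α β m).eval (1 - 2 * t) = 
      ∑ i ∈ Finset.range (m + 1), cf α β i m * (-1) ^ i * t ^ i := by
  rw [jacobiP_expand α β hα hβ, eval_finsetSum]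
  apply Finset.sum_congr rfl
  intro k _
  simp only [eval_mul, eval_C, eval_pow, eval_sub, eval_X, eval_one]
  rw [show (2⁻¹ : ℝ) * (1 - 2 * t - 1) = -1 * t by ring, mul_pow]
  ring

lemma jac_inner_sum (α β : ℝ) (hα : -1 < α) (hβ : -1 < β) (m i : ℕ) (hi : i ≤ m) :
    ∑ k ∈ Finset.range (m + 1), jc α β m k * (-1) ^ k * 
      (Real.Gamma (α + k + i + 1) * Real.Gamma (β + (m - k : ℕ) + 1) / 
        Real.Gamma (α + k + i + 1 + (β + (m - k : ℕ) + 1))) = 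
    if i = m then (-1) ^ m * (Real.Gamma (m + α + 1) * Real.Gamma (m + β + 1) / 
      Real.Gamma (α + β + 2 * m + 2)) else 0 := by
  have h : ∀ k ∈ Finset.range (m + 1), jc α β m k * (-1) ^ k * 
      (Real.Gamma (α + k + i + 1) * Real.Gamma (β + (m - k : ℕ) + 1) / 
        Real.Gamma (α + k + i + 1 + (β + (m - k : ℕ) + 1))) = 
      (Real.Gamma (m + α + 1) * Real.Gamma (m + β + 1) / 
      (m.factorial * Real.Gamma (α + β + m + i + 2))) * 
        ((-1 : ℝ) ^ k * m.choose k * rfac (α + 1 + k) i) := by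
    intro k hk
    have hk' : k ≤ m := by simpa [Nat.lt_succ_iff] using hk
    have h1 : Real.Gamma ((m : ℝ) - k + 1) = (m - k).factorial := by
      rw [← Real.Gamma_nat_eq_factorial]; push_cast [hk']; rfl
    have h2 : Real.Gamma ((k : ℝ) + 1) = k.factorial := Real.Gamma_nat_eq_factorial k
    have hkm : (k : ℝ) ≤ m := by exact_mod_cast hk'
    have hk0 : (0 : ℝ) ≤ k := by positivity
    have h4 : Real.Gamma (α + k + i + 1) = rfac (α + 1 + k) i * Real.Gamma (α + k + 1) := by
      rw [show α + k + 1 = α + 1 + k by ring, ← gamma_rfac _ (by linarith)]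
      congr 1; ring
    have p1 : 0 < Real.Gamma ((m : ℝ) - k + β + 1) := Real.Gamma_pos_of_pos (by linarith)
    have p2 : 0 < Real.Gamma (α + k + 1) := Real.Gamma_pos_of_pos (by linarith)
    have p3 : 0 < Real.Gamma (α + β + m + i + 2) := Real.Gamma_pos_of_pos 
      (by have : (0:ℝ) ≤ i := by positivity
          have : (0:ℝ) ≤ m := by positivity
          linarith)
    push_cast [hk']
    rw [show β + (m - k : ℝ) + 1 = m - k + β + 1 by ring, 
      show α + k + i + 1 + (m - k + β + 1) = α + β + m + i + 2 by ring, h4, jc, h1, h2, 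
      Nat.cast_choose ℝ hk']
    field_simp
  rw [Finset.sum_congr rfl h, ← Finset.mul_sum, sum_diff _ _ _ hi]
  split_ifs with hh
  · subst hh
    rw [show α + β + i + i + 2 = α + β + 2 * i + 2 by ring]
    field_simp
  · simp

lemma normSq_eq (α β : ℝ) (hα : -1 < α) (hβ : -1 < β) (m : ℕ) :
    jacobiNormSq α β m = 2 ^ (α + β + 1) * (cf α β m m * 
     (Real.Gamma (m + α + 1) * Real.Gamma (m + β + 1) / Real.Gamma (α + β + 2 * m + 2))) := by
  have h1 := intervalIntegral.integral_comp_sub_mul (a := 0) (b := 1) (c := 2)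
    (fun x => (jacobiP α β m).eval x ^ 2 * (1 - x) ^ α * (1 + x) ^ β) (by norm_num) 1
  have h2 : jacobiNormSq α β m = 2 * ∫ t in (0:ℝ)..1, (jacobiP α β m).eval (1 - 2 * t) ^ 2 * 
      (1 - (1 - 2 * t)) ^ α * (1 + (1 - 2 * t)) ^ β := by
    rw [h1, jacobiNormSq]; norm_num; ring
  have h3 : ∫ t in (0:ℝ)..1, (jacobiP α β m).eval (1 - 2 * t) ^ 2 * 
      (1 - (1 - 2 * t)) ^ α * (1 + (1 - 2 * t)) ^ β = 
      ∫ t in (0:ℝ)..1, ∑ i ∈ Finset.range (m + 1), ∑ k ∈ Finset.range (m + 1), 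
        (2 ^ (α + β) * (cf α β i m * (-1) ^ i * (jc α β m k * (-1) ^ k))) * 
        (t ^ ((α + k + i + 1) - 1) * (1 - t) ^ ((β + (m - k : ℕ) + 1) - 1)) := by
    apply intervalIntegral.integral_congr_ae
    have : ∀ᵐ t : ℝ, t ≠ 1 := by simp [MeasureTheory.ae_iff]
    filter_upwards [this] with t ht1 ht
    rw [Set.uIoc_of_le zero_le_one] at ht
    have ht0 : 0 < t := ht.1
    have ht2 : 0 < 1 - t := by have := lt_of_le_of_ne ht.2 ht1; linarith
    rw [pow_two]
    nth_rw 1 [eval_jacobiP_cf α β hα hβ]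
    rw [eval_jacobiP_bern, Finset.sum_mul_sum, Finset.sum_mul, Finset.sum_mul]
    apply Finset.sum_congr rfl
    intro i _
    rw [Finset.sum_mul, Finset.sum_mul]
    apply Finset.sum_congr rfl
    intro k _
    rw [show 1 - (1 - 2 * t) = 2 * t by ring, show 1 + (1 - 2 * t) = 2 * (1 - t) by ring, 
      Real.mul_rpow (by norm_num) ht0.le, Real.mul_rpow (by norm_num) ht2.le, 
      Real.rpow_add (by norm_num), show α + k + i + 1 - 1 = α + k + i by ring, 
      show β + (m - k : ℕ) + 1 - 1 = β + (m - k : ℕ) by ring, Real.rpow_add ht0, 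
      Real.rpow_add ht0, Real.rpow_add ht2, Real.rpow_natCast, Real.rpow_natCast, Real.rpow_natCast]
    ring
  have hb : ∀ i k : ℕ, _ := fun i k => beta_real (α + k + i + 1) (β + (m - k : ℕ) + 1) 
    (by have : (0:ℝ) ≤ i := by positivity
        have : (0:ℝ) ≤ k := by positivity
        linarith) 
    (by have : (0:ℝ) ≤ (m - k : ℕ) := by positivity
        linarith)
  rw [h2, h3, intervalIntegral.integral_finsetSum]
  swap
  · intro i _
    have := IntervalIntegrable.sum (Finset.range (m + 1)) (fun k _ => (hb i k).1.const_mul 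
      (2 ^ (α + β) * (cf α β i m * (-1) ^ i * (jc α β m k * (-1) ^ k))))
    refine IntervalIntegrable.congr ?_ this
    intro t _; simp
  have h4 : ∀ i ∈ Finset.range (m + 1), (∫ t in (0:ℝ)..1, ∑ k ∈ Finset.range (m + 1), 
        (2 ^ (α + β) * (cf α β i m * (-1) ^ i * (jc α β m k * (-1) ^ k))) * 
        (t ^ ((α + k + i + 1) - 1) * (1 - t) ^ ((β + (m - k : ℕ) + 1) - 1))) = 
      2 ^ (α + β) * (cf α β i m * (-1) ^ i) * if i = m then (-1) ^ m * (Real.Gamma (m + α + 1) * Real.Gamma (m + β + 1) / 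
      Real.Gamma (α + β + 2 * m + 2)) else 0 := by
    intro i hi
    rw [intervalIntegral.integral_finsetSum (fun k _ => (hb i k).1.const_mul _), 
      ← jac_inner_sum α β hα hβ m i (by simpa [Nat.lt_succ_iff] using hi), Finset.mul_sum]
    apply Finset.sum_congr rfl
    intro k _
    rw [intervalIntegral.integral_const_mul, (hb i k).2]
    ring
  rw [Finset.sum_congr rfl h4]
  simp only [mul_ite, mul_zero, Finset.sum_ite_eq', Finset.mem_range, Nat.lt_succ_self, if_true]
  rw [Real.rpow_add_one (by norm_num)]
  have : (-1 : ℝ) ^ m * (-1) ^ m = 1 := by rw [← mul_pow]; simp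
  linear_combination (2 * 2 ^ (α + β) * (cf α β m m * 
     (Real.Gamma (m + α + 1) * Real.Gamma (m + β + 1) / Real.Gamma (α + β + 2 * m + 2)))) * this

lemma tendsto_ratio (a b c d : ℝ) (hc : c ≠ 0) : 
    Tendsto (fun n : ℕ => (a * (n : ℝ) + b) / (c * n + d)) atTop (nhds (a / c)) := by
  have h1 : Tendsto (fun n : ℕ => (a + b / (n : ℝ)) / (c + d / n)) atTop (nhds ((a + 0) / (c + 0))) := by
    apply Tendsto.div
    · exact tendsto_const_nhds.add (tendsto_const_div_atTop_nhds_zero_nat b)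
    · exact tendsto_const_nhds.add (tendsto_const_div_atTop_nhds_zero_nat d)
    · simpa using hc
  rw [add_zero, add_zero] at h1
  refine h1.congr' ?_
  filter_upwards [eventually_gt_atTop 0] with n hn
  have hn : (n : ℝ) ≠ 0 := by positivity
  rw [← mul_div_mul_right (a + b / (n:ℝ)) _ hn]
  congr 1 <;> field_simp

lemma ua_tendsto (a : ℝ) (ha : -1 < a) : 
    Tendsto (fun n : ℕ => Real.Gamma (n + a + 1) / (n.factorial * (n : ℝ) ^ a)) atTop (nhds 1) := by
  have hg : 0 < Real.Gamma (a + 1) := Real.Gamma_pos_of_pos (by linarith)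
  have h1 := (Real.GammaSeq_tendsto_Gamma (a + 1)).inv₀ hg.ne'
  have h2 := (h1.const_mul (Real.Gamma (a + 1))).mul (tendsto_ratio 1 0 1 (a + 1) one_ne_zero)
  rw [mul_inv_cancel₀ hg.ne', div_one, mul_one] at h2
  refine h2.congr' ?_
  filter_upwards [eventually_gt_atTop 0] with n hn
  have hn' : (0 : ℝ) < n := by exact_mod_cast hn
  have h3 := gamma_rfac (a + 1) (by linarith) (n + 1)
  rw [rfac, show a + 1 + ((n + 1 : ℕ) : ℝ) = n + a + 1 + 1 by push_cast; ring, 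
    Real.Gamma_add_one (by linarith)] at h3
  have h4 : 0 < Real.Gamma (n + a + 1) := Real.Gamma_pos_of_pos (by linarith)
  have h5 : (0:ℝ) < n + a + 1 := by linarith
  have h6 : ∏ l ∈ Finset.range (n + 1), (a + 1 + (l:ℝ)) = (n + a + 1) * Real.Gamma (n + a + 1) / Real.Gamma (a + 1) := by
    rw [h3]; field_simp
  rw [Real.GammaSeq, h6, Real.rpow_add_one hn'.ne', show 1 * (n:ℝ) + (a + 1) = n + a + 1 by ring]
  have h7 : 0 < (n:ℝ) ^ a := by positivity
  field_simp
  ring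

lemma wsum (p : ℝ) (hp : -1 < p) (n : ℕ) : 
    ∑ m ∈ Finset.range n, Real.Gamma (m + p + 1) / m.factorial = 
      n * (Real.Gamma (n + p + 1) / n.factorial) / (p + 1) := by
  have hp' : p + 1 ≠ 0 := by linarith
  induction n with
  | zero => simp
  | succ n ih => 
    rw [Finset.sum_range_succ, ih, Nat.factorial_succ]
    have h0 : (0 : ℝ) ≤ n := by positivity
    rw [show ((n + 1 : ℕ) : ℝ) + p + 1 = n + p + 1 + 1 by push_cast; ring, 
      Real.Gamma_add_one (show (n:ℝ) + p + 1 ≠ 0 by linarith)]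
    push_cast
    field_simp
    ring

lemma sum_asymp (p : ℝ) (hp : -1 < p) (f : ℕ → ℝ) (c : ℝ) 
    (hf : Tendsto (fun m : ℕ => f m / (m : ℝ) ^ p) atTop (nhds c)) : 
    Tendsto (fun n : ℕ => (∑ m ∈ Finset.range n, f m) / (n : ℝ) ^ (p + 1)) atTop (nhds (c / (p + 1))) := by
  set w : ℕ → ℝ := fun m => Real.Gamma (m + p + 1) / m.factorial with hw
  have wpos : ∀ m, 0 < w m := by
    intro m
    have h0 : (0 : ℝ) ≤ m := by positivity
    have := Real.Gamma_pos_of_pos (show 0 < (m:ℝ) + p + 1 by linarith)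
    simp only [hw]; positivity
  have hwp : Tendsto (fun m : ℕ => w m / (m : ℝ) ^ p) atTop (nhds 1) := by
    refine (ua_tendsto p hp).congr ?_
    intro m; simp only [hw]; rw [div_div]
  have hp' : 0 < p + 1 := by linarith
  have hS : Tendsto (fun n : ℕ => (∑ m ∈ Finset.range n, w m) / (n : ℝ) ^ (p + 1)) atTop (nhds (1 / (p + 1))) := by
    refine (hwp.div_const (p + 1)).congr' ?_
    filter_upwards [eventually_gt_atTop 0] with n hn
    have hn' : (0 : ℝ) < n := by exact_mod_cast hn
    have := wsum p hp n
    simp only [hw] at *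
    rw [this, Real.rpow_add_one hn'.ne']
    field_simp
  have hinf : Tendsto (fun n : ℕ => (n : ℝ) ^ (p + 1)) atTop atTop := 
    (tendsto_rpow_atTop hp').comp tendsto_natCast_atTop_atTop
  have hSinf : Tendsto (fun n : ℕ => ∑ m ∈ Finset.range n, w m) atTop atTop := by
    refine (hS.pos_mul_atTop (by positivity) hinf).congr' ?_
    filter_upwards [eventually_gt_atTop 0] with n hn
    have hn' : (0 : ℝ) < n := by exact_mod_cast hn
    rw [div_mul_cancel₀]; positivity
  have ho : (fun m => f m - c * w m) =o[atTop] w := by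
    rw [Asymptotics.isLittleO_iff_tendsto (fun x hx => absurd hx (wpos x).ne')]
    have := (hf.div hwp one_ne_zero).sub_const c
    rw [div_one, sub_self] at this
    refine this.congr' ?_
    filter_upwards [eventually_gt_atTop 0] with n hn
    have hn' : (0 : ℝ) < n := by exact_mod_cast hn
    have h1 : (n:ℝ) ^ p ≠ 0 := by positivity
    have h2 := (wpos n).ne'
    simp only [Pi.div_apply]
    field_simp
  have ho2 := ho.sum_range (fun m => (wpos m).le) hSinf
  have h3 := ho2.tendsto_div_nhds_zero
  have h4 := (h3.mul hS).add (hS.const_mul c)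
  rw [zero_mul, zero_add, mul_one_div] at h4
  refine h4.congr' ?_
  filter_upwards [hSinf.eventually_gt_atTop 0] with n hn
  rw [Finset.sum_sub_distrib, ← Finset.mul_sum]
  rw [div_mul_div_cancel₀ hn.ne', mul_div_assoc', ← add_div]
  congr 1; ring

lemma descFac_tendsto (i : ℕ) : 
    Tendsto (fun m : ℕ => (m.descFactorial i : ℝ) / (m : ℝ) ^ i) atTop (nhds 1) := by
  induction i with
  | zero => simp
  | succ i ih => 
    have := ((tendsto_ratio 1 (-(i:ℝ)) 1 0 one_ne_zero).mul ih)
    rw [div_one, mul_one] at this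
    refine this.congr' ?_
    filter_upwards [eventually_ge_atTop i] with n hn
    rw [Nat.descFactorial_succ]
    push_cast [hn]
    rw [pow_succ', div_mul_div_comm]
    congr 1 <;> ring

lemma rfac_tendsto (c : ℝ) (i : ℕ) : 
    Tendsto (fun m : ℕ => rfac (m + c) i / (m : ℝ) ^ i) atTop (nhds 1) := by
  induction i with
  | zero => simp [rfac]
  | succ i ih => 
    have := ((tendsto_ratio 1 (c + i) 1 0 one_ne_zero).mul ih)
    rw [div_one, mul_one] at this
    refine this.congr ?_
    intro n
    rw [rfac, rfac, Finset.prod_range_succ]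
    rw [pow_succ', div_mul_div_comm]
    congr 1 <;> ring

lemma cf_tendsto (α β : ℝ) (hα : -1 < α) (i : ℕ) : 
    Tendsto (fun m : ℕ => cf α β i m / (m : ℝ) ^ (2 * (i:ℝ) + α)) atTop
      (nhds (1 / (i.factorial * Real.Gamma (α + i + 1)))) := by
  have := (((ua_tendsto α hα).mul (descFac_tendsto i)).mul (rfac_tendsto (α + β + 1) i)).div_const 
    (i.factorial * Real.Gamma (α + i + 1))
  rw [mul_one, mul_one] at this
  refine this.congr' ?_
  filter_upwards [eventually_gt_atTop 0] with n hn
  have hn' : (0 : ℝ) < n := by exact_mod_cast hn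
  rw [cf, Real.rpow_add hn', show 2 * (i:ℝ) = ((i + i : ℕ) : ℝ) by push_cast; ring, Real.rpow_natCast, pow_add, 
    show (n:ℝ) + (α + β + 1) = n + α + β + 1 by ring]
  have : (n:ℝ) ^ α ≠ 0 := by positivity
  field_simp

lemma normSq_tendsto (α β : ℝ) (hα : -1 < α) (hβ : -1 < β) : 
    Tendsto (fun m : ℕ => jacobiNormSq α β m * m) atTop (nhds (2 ^ (α + β))) := by
  have h := ((((ua_tendsto α hα).mul (ua_tendsto β hβ)).div (ua_tendsto (α + β + 1) (by linarith)) 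
    one_ne_zero).mul (tendsto_ratio 1 (α + β + 1) 2 (α + β + 1) two_ne_zero)).const_mul 
      ((2:ℝ) ^ (α + β + 1))
  have e : (2:ℝ) ^ (α + β + 1) * (1 * 1 / 1 * (1 / 2)) = 2 ^ (α + β) := by
    rw [Real.rpow_add_one (by norm_num)]; ring
  rw [e] at h
  refine h.congr' ?_
  filter_upwards [eventually_gt_atTop 0] with n hn
  have hn' : (1 : ℝ) ≤ n := by exact_mod_cast hn
  have hn0 : (0 : ℝ) < n := by linarith
  have p1 : 0 < (n:ℝ) + α + β + 1 := by linarith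
  have p2 : 0 < 2 * (n:ℝ) + α + β + 1 := by linarith
  have g1 := Real.Gamma_pos_of_pos (show 0 < (n:ℝ) + α + 1 by linarith)
  have g2 := Real.Gamma_pos_of_pos (show 0 < (n:ℝ) + β + 1 by linarith)
  have g3 := Real.Gamma_pos_of_pos p1
  have g4 := Real.Gamma_pos_of_pos p2
  have e1 := gamma_rfac _ p1 n
  rw [show (n:ℝ) + α + β + 1 + n = 2 * n + α + β + 1 by ring] at e1
  have e2 : Real.Gamma (α + β + 2 * n + 2) = (2 * n + α + β + 1) * Real.Gamma (2 * n + α + β + 1) := by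
    rw [← Real.Gamma_add_one p2.ne']; congr 1; ring
  have e3 : Real.Gamma (n + (α + β + 1) + 1) = (n + α + β + 1) * Real.Gamma (n + α + β + 1) := by
    rw [← Real.Gamma_add_one p1.ne']; congr 1; ring
  have e4 : cf α β n n = Real.Gamma (2 * n + α + β + 1) / Real.Gamma (n + α + β + 1) / n.factorial := by
    rw [cf, e1, Nat.descFactorial_self, show α + n + 1 = n + α + 1 by ring]
    field_simp
  rw [normSq_eq α β hα hβ, e4, e2]
  simp only [Pi.div_apply]
  rw [e3, Real.rpow_add_one hn0.ne', Real.rpow_add hn0, show 1 * (n:ℝ) + (α + β + 1) = n + α + β + 1 by ring, 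
    show 2 * (n:ℝ) + (α + β + 1) = 2 * n + α + β + 1 by ring]
  have q1 : (n:ℝ) ^ α ≠ 0 := by positivity
  have q2 : (n:ℝ) ^ β ≠ 0 := by positivity
  generalize (2:ℝ) ^ (α + β + 1) = A
  generalize Real.Gamma (2 * n + α + β + 1) = G at *
  field_simp

/-- `1/(i! Γ(α+i+1))`. -/
noncomputable def ee (α : ℝ) (i : ℕ) : ℝ := 1 / (i.factorial * Real.Gamma (α + i + 1))

lemma ee_pos (α : ℝ) (hα : -1 < α) (i : ℕ) : 0 < ee α i := by
  have h0 : (0 : ℝ) ≤ i := by positivity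
  have := Real.Gamma_pos_of_pos (show 0 < α + i + 1 by linarith)
  rw [ee]; positivity

/-- `Σ_{m<n} P_m^{(j)}(1)/h_m * (coefficient i of P_m)`. -/
noncomputable def KK (α β : ℝ) (j i n : ℕ) : ℝ :=
  ∑ m ∈ Finset.range n, cf α β j m * (j.factorial / 2 ^ j) / jacobiNormSq α β m * cf α β i m

/-- The multiplier of the kernel in `Q_n`. -/
noncomputable def LL (α β : ℝ) (j : ℕ) (Ms : ℕ → ℝ) (n : ℕ) : ℝ :=
  Ms n * (cf α β j n * (j.factorial / 2 ^ j)) / (1 + Ms n * ((j.factorial / 2 ^ j) * KK α β j j n))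

/-- Scaled coefficients of `Q_n`. -/
noncomputable def qq (α β : ℝ) (j : ℕ) (Ms : ℕ → ℝ) (n i : ℕ) : ℝ :=
  (cf α β i n - LL α β j Ms n * KK α β j i n) / ((n : ℝ) ^ (2 * i) * (n : ℝ) ^ α)

lemma cf_eq_zero (α β : ℝ) {i m : ℕ} (h : m < i) : cf α β i m = 0 := by
  simp [cf, Nat.descFactorial_of_lt h]

lemma qq_eq_zero (α β : ℝ) (j : ℕ) (Ms : ℕ → ℝ) {n i : ℕ} (h : n < i) : qq α β j Ms n i = 0 := by
  have : KK α β j i n = 0 := by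
    apply Finset.sum_eq_zero
    intro m hm
    rw [cf_eq_zero α β (lt_trans (Finset.mem_range.mp hm) h), mul_zero]
  simp [qq, cf_eq_zero α β h, this]

lemma aeval_jacobiP (α β : ℝ) (hα : -1 < α) (hβ : -1 < β) (m N : ℕ) (h : m ≤ N) (s : ℂ) :
    aeval (1 + 2 * s) (jacobiP α β m) = ∑ i ∈ Finset.range (N + 1), ((cf α β i m : ℝ) : ℂ) * s ^ i := by
  rw [jacobiP_expand α β hα hβ, map_sum]
  have : ∀ i, aeval (1 + 2 * s) (C (cf α β i m) * (C (2⁻¹ : ℝ) * (X - 1)) ^ i) = ((cf α β i m : ℝ) : ℂ) * s ^ i := by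
    intro i
    simp [aeval_C]
  simp_rw [this]
  apply Finset.sum_subset
  · intro i; simp only [Finset.mem_range]; omega
  · intro i _ hi
    rw [cf_eq_zero α β (by simpa using hi)]; simp

lemma aeval_sobQ (α β : ℝ) (hα : -1 < α) (hβ : -1 < β) (j : ℕ) (Ms : ℕ → ℝ) (n : ℕ) (hn : 0 < n) (z : ℂ) :
    aeval (1 - z ^ 2 / (2 * (n : ℂ) ^ 2)) (sobQ α β j Ms n) / (((n : ℝ) ^ α : ℝ) : ℂ) = 
      ∑ i ∈ Finset.range (n + 1), ((qq α β j Ms n i : ℝ) : ℂ) * (-(z / 2) ^ 2) ^ i := by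
  have hnC : (n : ℂ) ≠ 0 := by exact_mod_cast hn.ne'
  have hx : 1 - z ^ 2 / (2 * (n : ℂ) ^ 2) = 1 + 2 * ((-(z / 2) ^ 2) / (n : ℂ) ^ 2) := by
    field_simp; ring
  have hL : Ms n * (derivative^[j] (jacobiP α β n)).eval 1 / (1 + Ms n * kernK α β j j (n - 1) 1 1) = LL α β j Ms n := by
    rw [deriv_jacobiP α β hα hβ, LL, kernK, KK, Nat.sub_add_cancel hn]
    congr 3
    rw [Finset.mul_sum]
    apply Finset.sum_congr rfl
    intro m _
    rw [deriv_jacobiP α β hα hβ]; ring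
  rw [sobQ, hL, hx, map_sub, map_mul, kernKPoly, Nat.sub_add_cancel hn, map_sum, 
    aeval_jacobiP α β hα hβ n n le_rfl]
  set s := ((-(z / 2) ^ 2) / (n : ℂ) ^ 2) with hs
  have h1 : ∑ m ∈ Finset.range n, aeval (1 + 2 * s) (C ((derivative^[j] (jacobiP α β m)).eval 1 / jacobiNormSq α β m) * jacobiP α β m) 
      = ∑ i ∈ Finset.range (n + 1), ((KK α β j i n : ℝ) : ℂ) * s ^ i := by
    have : ∀ m ∈ Finset.range n, aeval (1 + 2 * s) (C ((derivative^[j] (jacobiP α β m)).eval 1 / jacobiNormSq α β m) * jacobiP α β m) 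
      = ∑ i ∈ Finset.range (n + 1), ((cf α β j m * (j.factorial / 2 ^ j) / jacobiNormSq α β m * cf α β i m : ℝ) : ℂ) * s ^ i := by
      intro m hm
      rw [map_mul, aeval_jacobiP α β hα hβ m n (Finset.mem_range.mp hm).le, deriv_jacobiP α β hα hβ, Finset.mul_sum]
      apply Finset.sum_congr rfl
      intro i _
      rw [aeval_C, Complex.ofReal_mul (cf α β j m * (j.factorial / 2 ^ j) / jacobiNormSq α β m), mul_assoc]
      rfl
    rw [Finset.sum_congr rfl this, Finset.sum_comm]
    apply Finset.sum_congr rfl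
    intro i _
    rw [← Finset.sum_mul, KK, Complex.ofReal_sum]
  rw [h1, Finset.mul_sum, ← Finset.sum_sub_distrib, Finset.sum_div]
  apply Finset.sum_congr rfl
  intro i _
  rw [aeval_C, hs, div_pow, qq]
  have : (((n:ℝ) ^ α : ℝ) : ℂ) ≠ 0 := by
    have : (n:ℝ) ^ α ≠ 0 := by positivity
    exact_mod_cast this
  push_cast
  rw [← pow_mul]
  simp only [Complex.coe_algebraMap]
  field_simp

lemma KK_tendsto (α β : ℝ) (hα : -1 < α) (hβ : -1 < β) (j i : ℕ) : 
    Tendsto (fun n : ℕ => KK α β j i n / (n : ℝ) ^ (2 * (i:ℝ) + 2 * j + 2 * α + 2)) atTop 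
      (nhds (ee α j * (j.factorial / 2 ^ j) / 2 ^ (α + β) * ee α i / (2 * (i:ℝ) + 2 * j + 2 * α + 2))) := by
  have hi : (0:ℝ) ≤ i := by positivity
  have hj : (0:ℝ) ≤ j := by positivity
  have := sum_asymp (2 * (i:ℝ) + 2 * j + 2 * α + 1) (by linarith) 
    (fun m => cf α β j m * (j.factorial / 2 ^ j) / jacobiNormSq α β m * cf α β i m)
    (ee α j * (j.factorial / 2 ^ j) / 2 ^ (α + β) * ee α i) ?_
  · rw [show 2 * (i:ℝ) + 2 * j + 2 * α + 2 = 2 * (i:ℝ) + 2 * j + 2 * α + 1 + 1 by ring]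
    exact this
  · have := (((cf_tendsto α β hα j).mul_const (j.factorial / 2 ^ j : ℝ)).div (normSq_tendsto α β hα hβ) 
      (by positivity)).mul (cf_tendsto α β hα i)
    refine this.congr' ?_
    filter_upwards [eventually_gt_atTop 0] with n hn
    have hn' : (0 : ℝ) < n := by exact_mod_cast hn
    rw [show 2 * (i:ℝ) + 2 * j + 2 * α + 1 = (2 * j + α) + (2 * i + α) + 1 by ring, Real.rpow_add_one hn'.ne', 
      Real.rpow_add hn' (2 * j + α) (2 * i + α)]
    simp only [Pi.div_apply, div_eq_mul_inv, mul_inv]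
    ring

lemma SS_tendsto (α β : ℝ) (hα : -1 < α) (hβ : -1 < β) (j : ℕ) : 
    ∃ c : ℝ, Tendsto (fun n : ℕ => (∑ m ∈ Finset.range n, 
      |cf α β j m * (j.factorial / 2 ^ j) / jacobiNormSq α β m| * (Real.Gamma (m + α + 1) / m.factorial)) / 
        (n : ℝ) ^ (2 * (j:ℝ) + 2 * α + 2)) atTop (nhds c) := by
  have hj : (0:ℝ) ≤ j := by positivity
  have := sum_asymp (2 * (j:ℝ) + 2 * α + 1) (by linarith) 
    (fun m => |cf α β j m * (j.factorial / 2 ^ j) / jacobiNormSq α β m| * (Real.Gamma (m + α + 1) / m.factorial))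
    (|ee α j * (j.factorial / 2 ^ j) / 2 ^ (α + β)| * 1) ?_
  · rw [show 2 * (j:ℝ) + 2 * α + 2 = 2 * j + 2 * α + 1 + 1 by ring]
    exact ⟨_, this⟩
  · have := ((((cf_tendsto α β hα j).mul_const (j.factorial / 2 ^ j : ℝ)).div (normSq_tendsto α β hα hβ) 
      (by positivity)).abs).mul (ua_tendsto α hα)
    refine this.congr' ?_
    filter_upwards [eventually_gt_atTop 0] with n hn
    have hn' : (0 : ℝ) < n := by exact_mod_cast hn
    rw [show 2 * (j:ℝ) + 2 * α + 1 = (2 * j + α) + α + 1 by ring, Real.rpow_add_one hn'.ne', 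
      Real.rpow_add hn']
    have : (0:ℝ) < (n:ℝ) ^ (2 * (j:ℝ) + α) := by positivity
    simp only [Pi.div_apply, abs_div, abs_mul, abs_of_pos hn', abs_of_pos this]
    simp only [div_eq_mul_inv, mul_inv]
    ring

lemma LL_tendsto (α β : ℝ) (hα : -1 < α) (hβ : -1 < β) (j : ℕ) (γ M : ℝ) (hM : 0 < M) (Ms : ℕ → ℝ) 
    (hlim : Filter.Tendsto (fun n : ℕ => Ms n * (n : ℝ) ^ γ) Filter.atTop (nhds M))
    (hγ : γ < 2 * (α + 2 * j + 1)) : 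
    Tendsto (fun n : ℕ => LL α β j Ms n * (n : ℝ) ^ (2 * (j:ℝ) + α + 2)) atTop 
      (nhds ((4 * (j:ℝ) + 2 * α + 2) * 2 ^ (α + β) / (ee α j * (j.factorial / 2 ^ j)))) := by
  have hj : (0:ℝ) ≤ j := by positivity
  have hT : Tendsto (fun n : ℕ => Ms n * (n : ℝ) ^ (4 * (j:ℝ) + 2 * α + 2)) atTop atTop := by
    have h1 : Tendsto (fun n : ℕ => (n : ℝ) ^ (2 * (α + 2 * j + 1) - γ)) atTop atTop := 
      (tendsto_rpow_atTop (by linarith)).comp tendsto_natCast_atTop_atTop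
    refine (hlim.pos_mul_atTop hM h1).congr' ?_
    filter_upwards [eventually_gt_atTop 0] with n hn
    have hn' : (0 : ℝ) < n := by exact_mod_cast hn
    rw [mul_assoc, ← Real.rpow_add hn']
    congr 2; ring
  have hk := (KK_tendsto α β hα hβ j j).const_mul (j.factorial / 2 ^ j : ℝ)
  have hden := (hT.inv_tendsto_atTop).add hk
  have he := ee_pos α hα j
  have hp : 0 < 4 * (j:ℝ) + 2 * α + 2 := by linarith
  have hp2 : 2 * (j:ℝ) + 2 * j + 2 * α + 2 = 4 * j + 2 * α + 2 := by ring
  rw [hp2] at hden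
  have hd := (cf_tendsto α β hα j).mul_const (j.factorial / 2 ^ j : ℝ)
  have := hd.div hden (by positivity)
  rw [← ee] at this
  have e : ee α j * (j.factorial / 2 ^ j) / (0 + (j.factorial / 2 ^ j) * (ee α j * (j.factorial / 2 ^ j) / 2 ^ (α + β) * ee α j / (4 * (j:ℝ) + 2 * α + 2))) = (4 * (j:ℝ) + 2 * α + 2) * 2 ^ (α + β) / (ee α j * (j.factorial / 2 ^ j)) := by
    have : (0:ℝ) < 2 ^ (α + β) := by positivity
    rw [zero_add]
    field_simp
  rw [e] at this
  refine this.congr' ?_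
  filter_upwards [eventually_gt_atTop 0, hT.eventually_gt_atTop 0] with n hn hTn
  have hn' : (0 : ℝ) < n := by exact_mod_cast hn
  have e1 : (n:ℝ) ^ (4 * (j:ℝ) + 2 * α + 2) = (n:ℝ) ^ (2 * (j:ℝ) + α) * (n:ℝ) ^ (2 * (j:ℝ) + α + 2) := by
    rw [← Real.rpow_add hn']; congr 1; ring
  have q1 : (0:ℝ) < (n:ℝ) ^ (2 * (j:ℝ) + α) := by positivity
  have q2 : (0:ℝ) < (n:ℝ) ^ (2 * (j:ℝ) + α + 2) := by positivity
  have q3 : Ms n ≠ 0 := by intro h; rw [h] at hTn; simp at hTn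
  simp only [Pi.div_apply, LL, Pi.inv_apply]
  rw [e1]
  have e2 : (Ms n * ((n:ℝ) ^ (2 * (j:ℝ) + α) * (n:ℝ) ^ (2 * (j:ℝ) + α + 2)))⁻¹ + (j.factorial / 2 ^ j) * (KK α β j j n / ((n:ℝ) ^ (2 * (j:ℝ) + α) * (n:ℝ) ^ (2 * (j:ℝ) + α + 2))) 
    = (1 + Ms n * ((j.factorial / 2 ^ j) * KK α β j j n)) / (Ms n * ((n:ℝ) ^ (2 * (j:ℝ) + α) * (n:ℝ) ^ (2 * (j:ℝ) + α + 2))) := by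
    field_simp
  rw [e2, div_div_eq_mul_div]
  generalize (1 + Ms n * ((j.factorial / 2 ^ j) * KK α β j j n)) = W
  rw [div_mul_eq_mul_div]
  congr 1
  field_simp

lemma qq_tendsto (α β : ℝ) (hα : -1 < α) (hβ : -1 < β) (j : ℕ) (γ M : ℝ) (hM : 0 < M) (Ms : ℕ → ℝ) 
    (hlim : Filter.Tendsto (fun n : ℕ => Ms n * (n : ℝ) ^ γ) Filter.atTop (nhds M))
    (hγ : γ < 2 * (α + 2 * j + 1)) (i : ℕ) : 
    Tendsto (fun n : ℕ => qq α β j Ms n i) atTop (nhds (ee α i * (((i : ℝ) - j) / (α + j + i + 1)))) := by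
  have h := (cf_tendsto α β hα i).sub ((LL_tendsto α β hα hβ j γ M hM Ms hlim hγ).mul (KK_tendsto α β hα hβ j i))
  rw [← ee] at h
  have hi : (0:ℝ) ≤ i := by positivity
  have hj : (0:ℝ) ≤ j := by positivity
  have he := ee_pos α hα j
  have hp : 0 < 2 * (i:ℝ) + 2 * j + 2 * α + 2 := by linarith
  have hp' : 0 < α + j + i + 1 := by linarith
  have e : ee α i - (4 * (j:ℝ) + 2 * α + 2) * 2 ^ (α + β) / (ee α j * (j.factorial / 2 ^ j)) * 
      (ee α j * (j.factorial / 2 ^ j) / 2 ^ (α + β) * ee α i / (2 * (i:ℝ) + 2 * j + 2 * α + 2)) = 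
      ee α i * (((i : ℝ) - j) / (α + j + i + 1)) := by
    have : (0:ℝ) < 2 ^ (α + β) := by positivity
    rw [show 2 * (i:ℝ) + 2 * j + 2 * α + 2 = 2 * (α + j + i + 1) by ring]
    field_simp
    ring
  rw [e] at h
  refine h.congr' ?_
  filter_upwards [eventually_gt_atTop 0] with n hn
  have hn' : (0 : ℝ) < n := by exact_mod_cast hn
  have e1 : (n:ℝ) ^ (2 * (i:ℝ) + 2 * j + 2 * α + 2) = (n:ℝ) ^ (2 * (i:ℝ) + α) * (n:ℝ) ^ (2 * (j:ℝ) + α + 2) := by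
    rw [← Real.rpow_add hn']; congr 1; ring
  have e2 : (n:ℝ) ^ (2 * (i:ℝ) + α) = (n:ℝ) ^ (2 * i) * (n:ℝ) ^ α := by
    rw [Real.rpow_add hn', ← Real.rpow_natCast]; push_cast; rfl
  have q2 : (0:ℝ) < (n:ℝ) ^ (2 * (j:ℝ) + α + 2) := by positivity
  have q3 : (0:ℝ) < (n:ℝ) ^ α := by positivity
  rw [e1, e2, qq]
  field_simp

lemma cf_bound (α β : ℝ) (hα : -1 < α) (i m n : ℕ) (hm : m ≤ n) (hn : 0 < n) : 
    |cf α β i m| ≤ Real.Gamma (m + α + 1) / m.factorial * (((2 + |α + β + 1|) ^ i * (n:ℝ) ^ (2 * i)) * ee α i) := by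
  have h0 : (0 : ℝ) ≤ m := by positivity
  have hg := Real.Gamma_pos_of_pos (show 0 < (m:ℝ) + α + 1 by linarith)
  have hee := ee_pos α hα i
  have hn1 : (1:ℝ) ≤ n := by exact_mod_cast hn
  have hmn : (m:ℝ) ≤ n := by exact_mod_cast hm
  rcases lt_or_ge m i with h | h
  · rw [cf_eq_zero α β h, abs_zero]; positivity
  · have e : cf α β i m = Real.Gamma (m + α + 1) / m.factorial * ((m.descFactorial i * rfac (m + α + β + 1) i) * ee α i) := by
      rw [cf, ee]; ring
    rw [e, abs_mul, abs_mul, abs_mul, abs_of_pos hee, abs_of_pos (show 0 < Real.Gamma (m + α + 1) / m.factorial by positivity)]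
    have b1 : |(m.descFactorial i : ℝ)| ≤ (n:ℝ) ^ i := by
      rw [abs_of_nonneg (by positivity)]
      calc (m.descFactorial i : ℝ) ≤ (m:ℝ) ^ i := by exact_mod_cast Nat.descFactorial_le_pow m i
        _ ≤ _ := by gcongr
    have b2 : |rfac (m + α + β + 1) i| ≤ ((2 + |α + β + 1|) * n) ^ i := by
      rw [rfac, Finset.abs_prod]
      calc ∏ l ∈ Finset.range i, |(m:ℝ) + α + β + 1 + l| ≤ ∏ l ∈ Finset.range i, ((2 + |α + β + 1|) * n) := by
            apply Finset.prod_le_prod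
            · intros; positivity
            · intro l hl
              have hl' : (l:ℝ) ≤ n := by
                have := Finset.mem_range.mp hl
                exact_mod_cast (by omega : l ≤ n)
              have a1 : |(m:ℝ) + α + β + 1 + l| ≤ m + l + |α + β + 1| := by
                rw [show (m:ℝ) + α + β + 1 + l = (m + l) + (α + β + 1) by ring]
                refine (abs_add_le _ _).trans ?_
                rw [abs_of_nonneg (by positivity)]
              have := abs_nonneg (α + β + 1)
              nlinarith
        _ = _ := by simp
    calc _ ≤ Real.Gamma (m + α + 1) / m.factorial * (((n:ℝ) ^ i * ((2 + |α + β + 1|) * n) ^ i) * ee α i) := by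
          gcongr
      _ = _ := by rw [mul_pow, two_mul, pow_add]; ring

lemma qq_bound (α β : ℝ) (hα : -1 < α) (hβ : -1 < β) (j : ℕ) (γ M : ℝ) (hM : 0 < M) (Ms : ℕ → ℝ) 
    (hlim : Filter.Tendsto (fun n : ℕ => Ms n * (n : ℝ) ^ γ) Filter.atTop (nhds M))
    (hγ : γ < 2 * (α + 2 * j + 1)) : 
    ∃ B : ℝ, 0 < B ∧ ∀ᶠ n in atTop, ∀ i, |qq α β j Ms n i| ≤ B * ((2 + |α + β + 1|) ^ i * ee α i) := by
  obtain ⟨c, hc⟩ := SS_tendsto α β hα hβ j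
  have h := (ua_tendsto α hα).add (((LL_tendsto α β hα hβ j γ M hM Ms hlim hγ).abs).mul hc)
  generalize 1 + |(4 * (j:ℝ) + 2 * α + 2) * 2 ^ (α + β) / (ee α j * (j.factorial / 2 ^ j))| * c = B0 at h
  refine ⟨|B0| + 1, by positivity, ?_⟩
  have hlt : B0 < |B0| + 1 := by linarith [le_abs_self B0]
  filter_upwards [eventually_gt_atTop 0, h.eventually_lt_const hlt] with n hn hB i
  have hn' : (0 : ℝ) < n := by exact_mod_cast hn
  have hee := ee_pos α hα i
  set S := ∑ m ∈ Finset.range n, 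
      |cf α β j m * (j.factorial / 2 ^ j) / jacobiNormSq α β m| * (Real.Gamma (m + α + 1) / m.factorial) with hS
  have hK : |KK α β j i n| ≤ S * (((2 + |α + β + 1|) ^ i * (n:ℝ) ^ (2 * i)) * ee α i) := by
    rw [KK, hS, Finset.sum_mul]
    refine (Finset.abs_sum_le_sum_abs _ _).trans (Finset.sum_le_sum ?_)
    intro m hm
    rw [abs_mul, mul_assoc]
    gcongr
    exact cf_bound α β hα i m n (Finset.mem_range.mp hm).le hn
  have hC := cf_bound α β hα i n n le_rfl hn
  have e1 : (n:ℝ) ^ (2 * (j:ℝ) + 2 * α + 2) = (n:ℝ) ^ (2 * (j:ℝ) + α + 2) * (n:ℝ) ^ α := by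
    rw [← Real.rpow_add hn']; congr 1; ring
  have q2 : (0:ℝ) < (n:ℝ) ^ (2 * (j:ℝ) + α + 2) := by positivity
  have q3 : (0:ℝ) < (n:ℝ) ^ α := by positivity
  rw [e1, abs_mul, abs_of_pos q2] at hB
  have q4 : 0 < (n:ℝ) ^ (2 * i) * (n:ℝ) ^ α := by positivity
  rw [qq, abs_div, abs_of_pos q4, div_le_iff₀ q4]
  calc |cf α β i n - LL α β j Ms n * KK α β j i n| 
      ≤ |cf α β i n| + |LL α β j Ms n| * |KK α β j i n| := by
        rw [← abs_mul]; exact abs_sub _ _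
    _ ≤ Real.Gamma (n + α + 1) / n.factorial * (((2 + |α + β + 1|) ^ i * (n:ℝ) ^ (2 * i)) * ee α i) + 
        |LL α β j Ms n| * (S * (((2 + |α + β + 1|) ^ i * (n:ℝ) ^ (2 * i)) * ee α i)) := by gcongr
    _ = (Real.Gamma (n + α + 1) / (n.factorial * (n:ℝ) ^ α) + |LL α β j Ms n| * (n:ℝ) ^ (2 * (j:ℝ) + α + 2) * 
         (S / ((n:ℝ) ^ (2 * (j:ℝ) + α + 2) * (n:ℝ) ^ α))) * ((2 + |α + β + 1|) ^ i * ee α i) * ((n:ℝ) ^ (2 * i) * (n:ℝ) ^ α) := by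
        field_simp
    _ ≤ _ := by gcongr

lemma hasSum_of_eq {f g : ℕ → ℂ} {a : ℂ} (h : HasSum g a) (hfg : ∀ i, f i = g i) : HasSum f a := by
  rw [funext hfg]
  exact h

lemma summable_ee (ν : ℝ) (hν : -1 < ν) (ρ : ℝ) (hρ : 0 < ρ) :
    Summable (fun i : ℕ => ρ ^ i * ee ν i) := by
  have hpos : ∀ i : ℕ, 0 < ρ ^ i * ee ν i := fun i => mul_pos (pow_pos hρ i) (ee_pos ν hν i)
  apply summable_of_ratio_test_tendsto_lt_one (l := 0) zero_lt_one
  · exact Eventually.of_forall fun i => (hpos i).ne'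
  · have h1 : ∀ i : ℕ, ‖ρ ^ (i + 1) * ee ν (i + 1)‖ / ‖ρ ^ i * ee ν i‖ =
        ρ * ((1 / ((i : ℝ) + 1)) * (ν + 1 + i)⁻¹) := by
      intro i
      rw [Real.norm_of_nonneg (hpos _).le, Real.norm_of_nonneg (hpos _).le]
      have h0 : (0 : ℝ) < ν + i + 1 := by
        have : (0 : ℝ) ≤ i := Nat.cast_nonneg i
        linarith
      have hg : Real.Gamma (ν + ((i + 1 : ℕ) : ℝ) + 1) = (ν + i + 1) * Real.Gamma (ν + i + 1) := by
        rw [← Real.Gamma_add_one h0.ne']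
        congr 1
        push_cast
        ring
      unfold ee
      rw [hg, Nat.factorial_succ]
      have hG := (Real.Gamma_pos_of_pos h0).ne'
      have hf : (i.factorial : ℝ) ≠ 0 := Nat.cast_ne_zero.mpr i.factorial_ne_zero
      have h2 : (ν + 1 + i) ≠ 0 := by
        have := h0.ne'
        intro h
        apply this
        linarith
      have h3 := h0.ne'
      have h4 : ((i : ℝ) + 1) ≠ 0 := by positivity
      push_cast
      field_simp
      ring
    simp_rw [h1]
    have h2 : Tendsto (fun i : ℕ => (ν + 1 + i)⁻¹) atTop (nhds 0) :=
      tendsto_inv_atTop_zero.comp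
        (tendsto_atTop_add_const_left _ _ tendsto_natCast_atTop_atTop)
    have h3 := (tendsto_one_div_add_atTop_nhds_zero_nat (𝕜 := ℝ)).mul h2
    simpa using h3.const_mul ρ

lemma hasSum_bessel (ν : ℝ) (hν : -1 < ν) (z : ℂ) :
    HasSum (fun l : ℕ => ((ee ν l : ℝ) : ℂ) * (-(z / 2) ^ 2) ^ l) (besselG ν z) := by
  have hs : Summable (fun l : ℕ => ((ee ν l : ℝ) : ℂ) * (-(z / 2) ^ 2) ^ l) := by
    refine Summable.of_norm_bounded (summable_ee ν hν (‖(z / 2) ^ 2‖ + 1) (by positivity)) ?_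
    intro l
    rw [norm_mul, norm_pow, norm_neg, Complex.norm_real, Real.norm_of_nonneg (ee_pos ν hν l).le,
      mul_comm]
    have := (ee_pos ν hν l).le
    gcongr
    linarith
  have he : besselG ν z = ∑' l : ℕ, ((ee ν l : ℝ) : ℂ) * (-(z / 2) ^ 2) ^ l := by
    unfold besselG
    congr 1
    ext l
    have : Complex.Gamma ((l : ℂ) + (ν : ℂ) + 1) = ((Real.Gamma (ν + l + 1) : ℝ) : ℂ) := by
      rw [← Complex.Gamma_ofReal]
      congr 1
      push_cast
      ring
    rw [this]
    unfold ee
    push_cast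
    rw [neg_pow ((z / 2) ^ 2), ← pow_mul]
    ring
  rw [he]
  exact hs.hasSum

lemma hasSum_bessel_shift (α : ℝ) (hα : -1 < α) (k : ℕ) (z : ℂ) :
    HasSum (fun i : ℕ => (((-1) ^ k * (i.descFactorial k : ℝ) /
        (i.factorial * Real.Gamma (α + i + k + 1)) : ℝ) : ℂ) * (-(z / 2) ^ 2) ^ i)
      ((z / 2) ^ (2 * k) * besselG (α + 2 * k) z) := by
  have hν : -1 < α + 2 * (k : ℝ) := by
    have : (0 : ℝ) ≤ k := Nat.cast_nonneg k
    linarith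
  have h := (hasSum_bessel (α + 2 * k) hν z).mul_left ((z / 2) ^ (2 * k))
  have h0 : ∑ i ∈ Finset.range k, (((-1) ^ k * (i.descFactorial k : ℝ) /
        (i.factorial * Real.Gamma (α + i + k + 1)) : ℝ) : ℂ) * (-(z / 2) ^ 2) ^ i = 0 := by
    apply Finset.sum_eq_zero
    intro i hi
    rw [Nat.descFactorial_of_lt (Finset.mem_range.mp hi)]
    simp
  rw [← hasSum_nat_add_iff' k, h0, sub_zero]
  refine hasSum_of_eq h fun l => ?_
  have hd : ((l + k).factorial : ℝ) = (l.factorial : ℝ) * ((l + k).descFactorial k : ℝ) := by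
    have := Nat.factorial_mul_descFactorial (Nat.le_add_left k l)
    rw [Nat.add_sub_cancel] at this
    exact_mod_cast this.symm
  have hdp : ((l + k).descFactorial k : ℝ) ≠ 0 := by
    intro h
    rw [h, mul_zero] at hd
    exact Nat.factorial_ne_zero _ (by exact_mod_cast hd)
  have hc : ((-1) ^ k * ((l + k).descFactorial k : ℝ) /
        ((l + k).factorial * Real.Gamma (α + ((l + k : ℕ) : ℝ) + k + 1)) : ℝ) =
      (-1) ^ k * ee (α + 2 * k) l := by
    unfold ee
    have hg : α + ((l + k : ℕ) : ℝ) + k + 1 = α + 2 * k + l + 1 := by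
      push_cast
      ring
    have hG : Real.Gamma (α + 2 * k + l + 1) ≠ 0 := by
      apply (Real.Gamma_pos_of_pos _).ne'
      have : (0 : ℝ) ≤ l := Nat.cast_nonneg l
      linarith
    have hf : (l.factorial : ℝ) ≠ 0 := Nat.cast_ne_zero.mpr l.factorial_ne_zero
    rw [hg, hd]
    field_simp
  rw [hc]
  push_cast
  rw [pow_add (-(z / 2) ^ 2) l k, neg_pow ((z / 2) ^ 2) k, ← pow_mul (z / 2) 2 k]
  have : ((-1 : ℂ) ^ k) * (-1) ^ k = 1 := by
    rw [← mul_pow]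
    simp
  linear_combination ((ee (α + 2 * k) l : ℝ) : ℂ) * (-(z / 2) ^ 2) ^ l * (z / 2) ^ (2 * k) * this

lemma rfac_split (x : ℝ) (k n : ℕ) (h : k ≤ n) : rfac x n = rfac x k * rfac (x + k) (n - k) := by
  obtain ⟨m, rfl⟩ := Nat.exists_eq_add_of_le h
  rw [Nat.add_sub_cancel_left]
  unfold rfac
  rw [Finset.prod_range_add]
  congr 1
  apply Finset.prod_congr rfl
  intro l _
  push_cast
  ring

lemma rfac_pos (x : ℝ) (hx : 0 < x) (k : ℕ) : 0 < rfac x k := by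
  unfold rfac
  exact Finset.prod_pos fun l _ => by positivity

lemma coeff_equiv (x J : ℝ) (hx : 0 < x) (j : ℕ) (c : ℕ → ℝ) :
    (∑ k ∈ Finset.range (j + 2), c k / rfac x k = J / (x + j)) ↔
    (∑ k ∈ Finset.range (j + 2), c k * rfac (x + k) (j + 1 - k) = J * rfac x j) := by
  have hp := (rfac_pos x hx (j + 1)).ne'
  have hxj : x + j ≠ 0 := by positivity
  have h1 : ∑ k ∈ Finset.range (j + 2), c k * rfac (x + k) (j + 1 - k) =
      (∑ k ∈ Finset.range (j + 2), c k / rfac x k) * rfac x (j + 1) := by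
    rw [Finset.sum_mul]
    apply Finset.sum_congr rfl
    intro k hk
    have := (rfac_pos x hx k).ne'
    rw [rfac_split x k (j + 1) (by have := Finset.mem_range.mp hk; omega)]
    field_simp
  have h2 : J * rfac x j = J / (x + j) * rfac x (j + 1) := by
    have : rfac x (j + 1) = rfac x j * (x + j) := by
      unfold rfac
      rw [Finset.prod_range_succ]
    rw [this]
    field_simp
  rw [h1, h2]
  exact (mul_left_inj' hp).symm

lemma coeff_all (α : ℝ) (hα : -1 < α) (j : ℕ) (b : ℕ → ℝ)
    (hb : ∀ i, i ≤ j + 1 →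
      (∑ k ∈ Finset.range (i + 1),
          b k * (Nat.choose i k : ℝ) * (-1) ^ k * (Nat.factorial k : ℝ) * 2 ^ k *
            Real.Gamma (α + i + 1) / Real.Gamma (α + i + k + 1)) =
        ((i : ℝ) - j) / (α + j + i + 1)) (i : ℕ) :
    ∑ k ∈ Finset.range (j + 2), b k * 2 ^ k * ((-1) ^ k * (i.descFactorial k : ℝ) /
        (i.factorial * Real.Gamma (α + i + k + 1))) = ee α i * (((i : ℝ) - j) / (α + j + i + 1)) := by
  have hx : ∀ i : ℕ, 0 < α + i + 1 := fun i => by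
    have : (0 : ℝ) ≤ i := Nat.cast_nonneg i
    linarith
  have hG : ∀ i k : ℕ, Real.Gamma (α + i + k + 1) = rfac (α + i + 1) k * Real.Gamma (α + i + 1) := by
    intro i k
    rw [← gamma_rfac _ (hx i)]
    congr 1
    ring
  have hGp : ∀ i : ℕ, Real.Gamma (α + i + 1) ≠ 0 := fun i => (Real.Gamma_pos_of_pos (hx i)).ne'
  set P : Polynomial ℝ := ∑ k ∈ Finset.range (j + 2), C (b k * (2 ^ k * (-1) ^ k)) *
    (descPochhammer ℝ k * (ascPochhammer ℝ (j + 1 - k)).comp (X + C (α + 1 + k))) with hP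
  set R : Polynomial ℝ := (X - C (j : ℝ)) * (ascPochhammer ℝ j).comp (X + C (α + 1)) with hR
  have hPe : ∀ i : ℕ, P.eval (i : ℝ) = ∑ k ∈ Finset.range (j + 2),
      (b k * (2 ^ k * (-1) ^ k) * (i.descFactorial k : ℝ)) * rfac (α + i + 1 + k) (j + 1 - k) := by
    intro i
    rw [hP, eval_finsetSum]
    apply Finset.sum_congr rfl
    intro k _
    rw [eval_mul, eval_C, eval_mul, descPochhammer_eval_eq_descFactorial, eval_comp, eval_add,
      eval_X, eval_C, rfac_eq_eval, ← mul_assoc]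
    congr 2
    ring
  have hRe : ∀ i : ℕ, R.eval (i : ℝ) = ((i : ℝ) - j) * rfac (α + i + 1) j := by
    intro i
    rw [hR, eval_mul, eval_sub, eval_X, eval_C, eval_comp, eval_add, eval_X, eval_C, rfac_eq_eval]
    congr 2
    ring
  have hPR : P = R := by
    apply eq_of_natDegree_lt_card_of_eval_eq P R (ι := Fin (j + 2)) (f := fun i => ((i : ℕ) : ℝ))
    · intro a c h
      simpa [Fin.ext_iff] using h
    · rintro ⟨i, hi⟩
      simp only
      rw [hPe, hRe, ← coeff_equiv (α + i + 1) _ (hx i)]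
      have h := hb i (by omega)
      rw [show α + (i : ℝ) + 1 + j = α + j + i + 1 by ring, ← h]
      symm
      apply Finset.sum_subset_zero_on_sdiff
      · intro k hk
        rw [Finset.mem_range] at *
        omega
      · intro k hk
        rw [Finset.mem_sdiff, Finset.mem_range, Finset.mem_range] at hk
        rw [Nat.descFactorial_of_lt (by omega)]
        simp
      · intro k _
        rw [hG, Nat.descFactorial_eq_factorial_mul_choose]
        have h1 := (rfac_pos _ (hx i) k).ne'
        have h2 := hGp i
        push_cast
        field_simp
    · rw [Fintype.card_fin]
      have hP1 : P.natDegree ≤ j + 1 := by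
        rw [hP]
        apply natDegree_sum_le_of_forall_le
        intro k hk
        have hk' := Finset.mem_range.mp hk
        refine (natDegree_C_mul_le _ _).trans (natDegree_mul_le.trans ?_)
        rw [descPochhammer_natDegree, natDegree_comp, ascPochhammer_natDegree, natDegree_X_add_C]
        omega
      have hR1 : R.natDegree ≤ j + 1 := by
        rw [hR]
        refine natDegree_mul_le.trans ?_
        rw [natDegree_comp, ascPochhammer_natDegree, natDegree_X_add_C, natDegree_X_sub_C]
        omega
      omega
  have h : P.eval (i : ℝ) = R.eval (i : ℝ) := by rw [hPR]
  rw [hPe, hRe, ← coeff_equiv (α + i + 1) _ (hx i)] at h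
  rw [show α + (j : ℝ) + i + 1 = α + i + 1 + j by ring, ← h, Finset.mul_sum]
  apply Finset.sum_congr rfl
  intro k _
  rw [hG]
  have h1 := (rfac_pos _ (hx i) k).ne'
  have h2 := hGp i
  have hf : (i.factorial : ℝ) ≠ 0 := Nat.cast_ne_zero.mpr i.factorial_ne_zero
  unfold ee
  field_simp

lemma hasSum_limit (α : ℝ) (hα : -1 < α) (j : ℕ) (b : ℕ → ℝ)
    (hb : ∀ i, i ≤ j + 1 →
      (∑ k ∈ Finset.range (i + 1),
          b k * (Nat.choose i k : ℝ) * (-1) ^ k * (Nat.factorial k : ℝ) * 2 ^ k *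
            Real.Gamma (α + i + 1) / Real.Gamma (α + i + k + 1)) =
        ((i : ℝ) - j) / (α + j + i + 1)) (z : ℂ) :
    HasSum (fun i : ℕ => ((ee α i * (((i : ℝ) - j) / (α + j + i + 1)) : ℝ) : ℂ) *
        (-(z / 2) ^ 2) ^ i)
      (∑ i ∈ Finset.range (j + 2),
        ((b i : ℝ) : ℂ) * 2 ^ i * (z / 2) ^ (2 * i) * besselG (α + 2 * i) z) := by
  have h := hasSum_sum (s := Finset.range (j + 2)) (fun k _ =>
    (hasSum_bessel_shift α hα k z).mul_left (((b k : ℝ) : ℂ) * 2 ^ k))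
  have e : (∑ i ∈ Finset.range (j + 2),
        ((b i : ℝ) : ℂ) * 2 ^ i * (z / 2) ^ (2 * i) * besselG (α + 2 * i) z) =
      ∑ i ∈ Finset.range (j + 2),
        ((b i : ℝ) : ℂ) * 2 ^ i * ((z / 2) ^ (2 * i) * besselG (α + 2 * i) z) := by
    apply Finset.sum_congr rfl
    intro k _
    ring
  rw [e]
  refine hasSum_of_eq h fun i => ?_
  rw [← coeff_all α hα j b hb i, Complex.ofReal_sum, Finset.sum_mul]
  apply Finset.sum_congr rfl
  intro k _
  push_cast
  ring

lemma unif_core (α β : ℝ) (hα : -1 < α) (hβ : -1 < β) (j : ℕ)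
    (γ M : ℝ) (hM : 0 < M) (Ms : ℕ → ℝ)
    (hlim : Filter.Tendsto (fun n : ℕ => Ms n * (n : ℝ) ^ γ) Filter.atTop (nhds M))
    (hγ : γ < 2 * (α + 2 * j + 1)) (F : ℂ → ℂ)
    (hF : ∀ z, HasSum (fun i : ℕ => ((ee α i * (((i : ℝ) - j) / (α + j + i + 1)) : ℝ) : ℂ) *
        (-(z / 2) ^ 2) ^ i) (F z))
    (K : Set ℂ) (hK : IsCompact K) :
    TendstoUniformlyOn
      (fun (n : ℕ) (z : ℂ) =>
        Polynomial.aeval (1 - z ^ 2 / (2 * (n : ℂ) ^ 2)) (sobQ α β j Ms n) /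
          (((n : ℝ) ^ α : ℝ) : ℂ)) F Filter.atTop K := by
  obtain ⟨B, hB, hbd⟩ := qq_bound α β hα hβ j γ M hM Ms hlim hγ
  have hq := qq_tendsto α β hα hβ j γ M hM Ms hlim hγ
  set q : ℕ → ℝ := fun i => ee α i * (((i : ℝ) - j) / (α + j + i + 1)) with hqdef
  set A : ℝ := 2 + |α + β + 1| with hA
  have hA0 : 0 < A := by positivity
  obtain ⟨ρ, hρ, hKρ⟩ : ∃ ρ : ℝ, 0 < ρ ∧ ∀ z ∈ K, ‖-(z / 2) ^ 2‖ ≤ ρ := by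
    obtain ⟨C, hC⟩ := hK.exists_bound_of_continuousOn (f := fun z : ℂ => -(z / 2) ^ 2)
      (by fun_prop)
    exact ⟨max C 1, by positivity, fun z hz => (hC z hz).trans (le_max_left _ _)⟩
  have hqb : ∀ i, |q i| ≤ B * (A ^ i * ee α i) := fun i =>
    le_of_tendsto (hq i).abs (hbd.mono fun n h => h i)
  have hsum : Summable (fun i : ℕ => 2 * B * ((A * ρ) ^ i * ee α i)) :=
    (summable_ee α hα (A * ρ) (by positivity)).mul_left _
  have hdom : ∀ᶠ n in atTop, ∀ i, ‖|qq α β j Ms n i - q i| * ρ ^ i‖ ≤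
      2 * B * ((A * ρ) ^ i * ee α i) := by
    filter_upwards [hbd] with n hn i
    rw [Real.norm_of_nonneg (by positivity)]
    have h1 : |qq α β j Ms n i - q i| ≤ 2 * (B * (A ^ i * ee α i)) := by
      have h2 := abs_sub (qq α β j Ms n i) (q i)
      have := hn i
      have := hqb i
      linarith
    calc _ ≤ 2 * (B * (A ^ i * ee α i)) * ρ ^ i := by gcongr
      _ = _ := by rw [mul_pow]; ring
  have hD : Tendsto (fun n => ∑' i, |qq α β j Ms n i - q i| * ρ ^ i) atTop (nhds 0) := by
    have h := tendsto_tsum_of_dominated_convergence (𝓕 := atTop)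
      (f := fun n i => |qq α β j Ms n i - q i| * ρ ^ i) (g := fun _ => (0 : ℝ)) hsum
      (fun i => by
        have h1 := ((hq i).sub_const (q i)).abs.mul_const (ρ ^ i)
        simpa [hqdef] using h1) hdom
    simpa using h
  rw [Metric.tendstoUniformlyOn_iff]
  intro ε hε
  filter_upwards [hD.eventually_lt_const hε, hdom, eventually_gt_atTop 0] with n hn hdn hn0 z hz
  refine lt_of_le_of_lt ?_ hn
  rw [aeval_sobQ α β hα hβ j Ms n hn0 z, dist_comm, dist_eq_norm]
  have hfin : HasSum (fun i : ℕ => ((qq α β j Ms n i : ℝ) : ℂ) * (-(z / 2) ^ 2) ^ i)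
      (∑ i ∈ Finset.range (n + 1), ((qq α β j Ms n i : ℝ) : ℂ) * (-(z / 2) ^ 2) ^ i) := by
    apply hasSum_sum_of_ne_finset_zero
    intro i hi
    rw [qq_eq_zero α β j Ms (by rw [Finset.mem_range] at hi; omega)]
    simp
  have hdiff := hfin.sub (hF z)
  rw [← hdiff.tsum_eq]
  have hs : Summable (fun i => |qq α β j Ms n i - q i| * ρ ^ i) :=
    Summable.of_norm_bounded hsum hdn
  apply tsum_of_norm_bounded hs.hasSum
  intro i
  rw [← sub_mul, ← Complex.ofReal_sub, norm_mul, norm_pow, Complex.norm_real, Real.norm_eq_abs]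
  have := hKρ z hz
  gcongr

/-- Mehler–Heine formula for `Q_n` when `γ < 2(α+2j+1)`. -/
theorem sobQ_mehlerHeine_small_gamma (α β : ℝ) (hα : -1 < α) (hβ : -1 < β) (j : ℕ)
    (γ M : ℝ) (hM : 0 < M) (Ms : ℕ → ℝ) (hMs : ∀ n, 0 ≤ Ms n)
    (hlim : Filter.Tendsto (fun n : ℕ => Ms n * (n : ℝ) ^ γ) Filter.atTop (nhds M))
    (hγ : γ < 2 * (α + 2 * j + 1)) (b : ℕ → ℝ)
    (hb : ∀ i, i ≤ j + 1 →
      (∑ k ∈ Finset.range (i + 1),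
          b k * (Nat.choose i k : ℝ) * (-1) ^ k * (Nat.factorial k : ℝ) * 2 ^ k *
            Real.Gamma (α + i + 1) / Real.Gamma (α + i + k + 1)) =
        ((i : ℝ) - j) / (α + j + i + 1))
    (K : Set ℂ) (hK : IsCompact K) :
    TendstoUniformlyOn
      (fun (n : ℕ) (z : ℂ) =>
        Polynomial.aeval (1 - z ^ 2 / (2 * (n : ℂ) ^ 2)) (sobQ α β j Ms n) /
          (((n : ℝ) ^ α : ℝ) : ℂ))
      (fun z => ∑ i ∈ Finset.range (j + 2),
        ((b i : ℝ) : ℂ) * 2 ^ i * (z / 2) ^ (2 * i) * besselG (α + 2 * i) z)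
      Filter.atTop K := by
  exact unif_core α β hα hβ j γ M hM Ms hlim hγ _ (hasSum_limit α hα j b hb) K hK
end

section
/- For all real α, β > −1, every j ∈ ℕ, every sequence (M_n) of nonnegative reals, and every n ≥ 1, the polynomial Q_n has exactly n real zeros, all simple (i.e., Q_n has n distinct real roots and each root has multiplicity one), and at most one of these zeros lies outside the interval [−1, 1]. -/
open Polynomial Filter

lemma iter_X_sub_mul (φ : ℝ[X]) (a : ℝ) (j : ℕ) :
    (derivative^[j] ((X - C a) * φ)).eval 1 =
      (1 - a) * (derivative^[j] φ).eval 1 + j * (derivative^[j - 1] φ).eval 1 := by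
  have h : (X - C a) * φ = φ * X - C a * φ := by ring
  rw [h, iterate_derivative_sub, iterate_derivative_mul_X, iterate_derivative_C_mul]
  simp
  ring

/-- The polynomial with simple zeros exactly at `S`. -/
noncomputable def nodeP (S : Finset ℝ) : ℝ[X] := ∏ s ∈ S, (X - C s)

lemma nodeP_monic (S : Finset ℝ) : (nodeP S).Monic :=
  monic_prod_of_monic _ _ fun s _ => monic_X_sub_C s

lemma nodeP_natDegree (S : Finset ℝ) : (nodeP S).natDegree = S.card := by
  unfold nodeP
  rw [natDegree_prod_of_monic _ _ fun s _ => monic_X_sub_C s]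
  simp

lemma nodeP_insert (S : Finset ℝ) (r : ℝ) (h : r ∉ S) :
    nodeP (insert r S) = (X - C r) * nodeP S := by
  unfold nodeP
  rw [Finset.prod_insert h]

lemma nodeP_erase (S : Finset ℝ) (r : ℝ) (h : r ∈ S) :
    (X - C r) * nodeP (S.erase r) = nodeP S := by
  unfold nodeP
  exact Finset.mul_prod_erase S (fun s => X - C s) h

lemma nodeP_roots (S : Finset ℝ) : (nodeP S).roots = S.val := by
  unfold nodeP
  exact roots_prod_X_sub_C S

lemma nodeP_eval_ne (S : Finset ℝ) (x : ℝ) (h : x ∉ S) : (nodeP S).eval x ≠ 0 := by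
  intro h0
  apply h
  have : x ∈ (nodeP S).roots := (mem_roots (nodeP_monic S).ne_zero).2 h0
  rwa [nodeP_roots] at this

lemma nodeP_deriv_nonneg (S : Finset ℝ) (hS : ∀ s ∈ S, s < 1) :
    ∀ j, 0 ≤ (derivative^[j] (nodeP S)).eval 1 := by
  induction S using Finset.induction_on with
  | empty =>
    intro j
    rcases j with _ | j
    · simp [nodeP]
    · simp [nodeP, iterate_derivative_one]
  | insert r S h ih =>
    intro j
    rw [nodeP_insert S r h, iter_X_sub_mul]
    have ih' := ih fun s hs => hS s (Finset.mem_insert_of_mem hs)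
    have hr := hS r (Finset.mem_insert_self _ _)
    have h1 := mul_nonneg (sub_nonneg.2 hr.le) (ih' j)
    have h2 := mul_nonneg (Nat.cast_nonneg (α := ℝ) j) (ih' (j - 1))
    linarith

/-- Constant sign on `(-1,1)`. -/
def ConstSign (R : ℝ[X]) : Prop :=
  (∀ x ∈ Set.Ioo (-1 : ℝ) 1, 0 ≤ R.eval x) ∨ (∀ x ∈ Set.Ioo (-1 : ℝ) 1, R.eval x ≤ 0)

lemma constSign_of_no_root (Q : ℝ[X]) (h : ∀ x ∈ Set.Ioo (-1 : ℝ) 1, Q.eval x ≠ 0) :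
    ConstSign Q := by
  by_contra hc
  unfold ConstSign at hc
  push Not at hc
  obtain ⟨⟨x, hx, hxn⟩, ⟨y, hy, hyp⟩⟩ := hc
  have hpre : IsPreconnected (Set.Ioo (-1 : ℝ) 1) := isPreconnected_Ioo
  obtain ⟨z, hz, hz0⟩ := hpre.intermediate_value hx hy Q.continuous.continuousOn
    (⟨hxn.le, hyp.le⟩ : (0:ℝ) ∈ Set.Icc (Q.eval x) (Q.eval y))
  exact h z hz hz0

lemma ConstSign.sq_mul {R T : ℝ[X]} (h : ConstSign R)
    (hT : ∀ x ∈ Set.Ioo (-1 : ℝ) 1, 0 ≤ T.eval x) : ConstSign (T * R) := by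
  rcases h with h | h
  · left; intro x hx; rw [eval_mul]; exact mul_nonneg (hT x hx) (h x hx)
  · right; intro x hx; rw [eval_mul]; exact mul_nonpos_of_nonneg_of_nonpos (hT x hx) (h x hx)

lemma ConstSign.neg {R : ℝ[X]} (h : ConstSign R) : ConstSign (-R) := by
  rcases h with h | h
  · right; intro x hx; have := h x hx; simpa using this
  · left; intro x hx; have := h x hx; simpa using this

lemma exists_nodes (d : ℕ) : ∀ Q : ℝ[X], Q ≠ 0 → Q.natDegree = d →
    ∃ S : Finset ℝ, (∀ s ∈ S, s ∈ Set.Ioo (-1 : ℝ) 1) ∧ nodeP S ∣ Q ∧ ConstSign (nodeP S * Q) := by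
  induction d with
  | zero =>
    intro Q hQ hd
    refine ⟨∅, by simp, by simp [nodeP], ?_⟩
    apply constSign_of_no_root
    rw [eq_C_of_natDegree_eq_zero hd] at hQ ⊢
    intro x _
    simp [nodeP]
    simpa using hQ
  | succ d ih =>
    intro Q hQ hd
    by_cases hr : ∃ r ∈ Set.Ioo (-1 : ℝ) 1, Q.eval r = 0
    · obtain ⟨r, hrI, hr0⟩ := hr
      obtain ⟨T, rfl⟩ := dvd_iff_isRoot.2 hr0
      have hT : T ≠ 0 := right_ne_zero_of_mul hQ
      have hTd : T.natDegree = d := by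
        rw [natDegree_mul (X_sub_C_ne_zero r) hT, natDegree_X_sub_C] at hd
        omega
      obtain ⟨S, hS, hdvd, hc⟩ := ih T hT hTd
      by_cases hrS : r ∈ S
      · refine ⟨S.erase r, fun s hs => hS s (Finset.mem_of_mem_erase hs), ?_, ?_⟩
        · refine dvd_trans ?_ (dvd_trans hdvd (Dvd.intro_left _ rfl))
          rw [← nodeP_erase S r hrS]
          exact Dvd.intro_left _ rfl
        · rw [← nodeP_erase S r hrS] at hc
          convert hc using 1
          ring
      · refine ⟨insert r S, ?_, ?_, ?_⟩
        · intro s hs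
          rcases Finset.mem_insert.1 hs with rfl | hs
          · exact hrI
          · exact hS s hs
        · rw [nodeP_insert S r hrS]
          exact mul_dvd_mul_left _ hdvd
        · rw [nodeP_insert S r hrS]
          have := hc.sq_mul (T := (X - C r) ^ 2) (fun x _ => by
            rw [eval_pow]; exact sq_nonneg _)
          convert this using 1
          ring
    · push Not at hr
      refine ⟨∅, by simp, by simp [nodeP], ?_⟩
      apply constSign_of_no_root
      simpa [nodeP] using hr

lemma exists_notMem_Ioo (S : Finset ℝ) {a b : ℝ} (h : a < b) : ∃ x ∈ Set.Ioo a b, x ∉ S := by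
  by_contra hc
  push Not at hc
  exact (Set.Ioo_infinite h) (S.finite_toSet.subset hc)

lemma zeros_abstract (L : ℝ[X] →ₗ[ℝ] ℝ)
    (hL : ∀ p : ℝ[X], p ≠ 0 → (∀ x ∈ Set.Ioo (-1 : ℝ) 1, 0 ≤ p.eval x) → 0 < L p)
    (n : ℕ) (hn : 1 ≤ n) (j : ℕ) (Q : ℝ[X]) (hQ : Q ≠ 0) (hd : Q.natDegree = n)
    (hort : ∀ p : ℝ[X], p.natDegree < n → (derivative^[j] p).eval 1 = 0 → L (Q * p) = 0) :
    Multiset.card Q.roots = n ∧ Q.roots.Nodup ∧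
      Multiset.card (Q.roots.filter (fun x => x < -1 ∨ 1 < x)) ≤ 1 := by
  have hcs : ∀ p : ℝ[X], p ≠ 0 → ConstSign p → L p ≠ 0 := by
    intro p hp h h0
    rcases h with h | h
    · exact (hL p hp h).ne' h0
    · have := hL (-p) (neg_ne_zero.2 hp) (fun x hx => by simpa using h x hx)
      rw [map_neg, h0] at this
      simp at this
  obtain ⟨S, hS, ⟨T, hT⟩, hc⟩ := exists_nodes n Q hQ hd
  have hφ : nodeP S ≠ 0 := (nodeP_monic S).ne_zero
  have hT0 : T ≠ 0 := by rintro rfl; simp at hT; exact hQ hT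
  have hdeg : S.card + T.natDegree = n := by
    rw [← hd, hT, natDegree_mul hφ hT0, nodeP_natDegree]
  have hnn := nodeP_deriv_nonneg S fun s hs => (hS s hs).2
  have hT1 : T.natDegree ≤ 1 := by
    by_contra hlt
    push Not at hlt
    by_cases hz : (derivative^[j] (nodeP S)).eval 1 = 0
    · refine hcs (nodeP S * Q) (mul_ne_zero hφ hQ) hc ?_
      rw [mul_comm]
      exact hort _ (by rw [nodeP_natDegree]; omega) hz
    · have hpos := lt_of_le_of_ne (hnn j) (Ne.symm hz)
      set e := (derivative^[j] (nodeP S)).eval 1 with he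
      set f := (j : ℝ) * (derivative^[j - 1] (nodeP S)).eval 1 with hf
      have hf0 : 0 ≤ f := mul_nonneg (Nat.cast_nonneg _) (hnn _)
      have hfe : 0 ≤ f / e := div_nonneg hf0 hpos.le
      set a := 1 + f / e with ha
      have h0 : L (Q * ((X - C a) * nodeP S)) = 0 := by
        apply hort
        · rw [natDegree_mul (X_sub_C_ne_zero a) hφ, natDegree_X_sub_C, nodeP_natDegree]
          omega
        · rw [iter_X_sub_mul, ← he, ← hf, ha]
          field_simp
          ring
      refine hcs _ ?_ ?_ h0
      · exact mul_ne_zero hQ (mul_ne_zero (X_sub_C_ne_zero a) hφ)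
      · have := (hc.sq_mul (T := C a - X) (fun x hx => by
          simp only [eval_sub, eval_C, eval_X]
          have := hx.2
          linarith)).neg
        convert this using 1
        ring
  have hfilt : S.val.filter (fun x => x < -1 ∨ 1 < x) = 0 := by
    rw [Multiset.filter_eq_nil]
    intro s hs h
    have := hS s hs
    rcases h with h | h
    · linarith [this.1]
    · linarith [this.2]
  rcases Nat.le_one_iff_eq_zero_or_eq_one.1 hT1 with h0 | h1
  · rw [eq_C_of_natDegree_eq_zero h0] at hT hT0
    have hr : Q.roots = S.val := by
      rw [hT, mul_comm, roots_C_mul _ (by simpa using hT0), nodeP_roots]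
    rw [hr]
    refine ⟨?_, S.nodup, ?_⟩
    · rw [Finset.card_val]; omega
    · rw [hfilt]; simp
  · obtain ⟨y, hy⟩ := exists_root_of_degree_eq_one
      ((degree_eq_iff_natDegree_eq_of_pos one_pos).2 h1)
    obtain ⟨U, rfl⟩ := dvd_iff_isRoot.2 hy
    have hU0 : U ≠ 0 := right_ne_zero_of_mul hT0
    have hUd : U.natDegree = 0 := by
      rw [natDegree_mul (X_sub_C_ne_zero y) hU0, natDegree_X_sub_C] at h1
      omega
    obtain ⟨c, rfl⟩ : ∃ c, U = C c := ⟨_, eq_C_of_natDegree_eq_zero hUd⟩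
    have hc0 : c ≠ 0 := by simpa using hU0
    have hr : Q.roots = y ::ₘ S.val := by
      have hT' : Q = C c * ((X - C y) * nodeP S) := by rw [hT]; ring
      rw [hT', roots_C_mul _ hc0, roots_mul (mul_ne_zero (X_sub_C_ne_zero y) hφ),
        roots_X_sub_C, nodeP_roots]
      rfl
    have hyS : y ∉ S := by
      intro hyS
      have hyI := hS y hyS
      obtain ⟨u, hu, huS⟩ := exists_notMem_Ioo S hyI.1
      obtain ⟨v, hv, hvS⟩ := exists_notMem_Ioo S hyI.2
      have hu2 : 0 < ((nodeP S).eval u) ^ 2 := by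
        have := nodeP_eval_ne S u huS
        positivity
      have hv2 : 0 < ((nodeP S).eval v) ^ 2 := by
        have := nodeP_eval_ne S v hvS
        positivity
      have hev : ∀ x, (nodeP S * Q).eval x = c * (x - y) * ((nodeP S).eval x) ^ 2 := by
        intro x
        rw [hT]
        simp only [eval_mul, eval_sub, eval_X, eval_C]
        ring
      have huI : u ∈ Set.Ioo (-1 : ℝ) 1 := ⟨hu.1, hu.2.trans hyI.2⟩
      have hvI : v ∈ Set.Ioo (-1 : ℝ) 1 := ⟨hyI.1.trans hv.1, hv.2⟩
      have hmul : 0 ≤ (nodeP S * Q).eval u * (nodeP S * Q).eval v := by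
        rcases hc with hc | hc
        · exact mul_nonneg (hc u huI) (hc v hvI)
        · exact mul_nonneg_of_nonpos_of_nonpos (hc u huI) (hc v hvI)
      rw [hev, hev] at hmul
      have h3 : 0 < (y - u) * (v - y) := mul_pos (sub_pos.2 hu.2) (sub_pos.2 hv.1)
      have h4 : 0 < c ^ 2 := by positivity
      have h5 := mul_pos (mul_pos h4 h3) (mul_pos hu2 hv2)
      linarith
    rw [hr]
    refine ⟨?_, ?_, ?_⟩
    · rw [Multiset.card_cons, Finset.card_val]; omega
    · exact Multiset.nodup_cons.2 ⟨hyS, S.nodup⟩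
    · rw [Multiset.filter_cons, hfilt, add_zero]
      split_ifs <;> simp

/-- The Jacobi weight. -/
noncomputable def jacW (α β x : ℝ) : ℝ := (1 - x) ^ α * (1 + x) ^ β

lemma jacW_int (α β : ℝ) (hα : -1 < α) (hβ : -1 < β) :
    IntervalIntegrable (jacW α β) MeasureTheory.volume (-1) 1 := by
  have e1 : IntervalIntegrable (fun x : ℝ => (1 + x) ^ β) MeasureTheory.volume (-1) 0 := by
    have := (intervalIntegral.intervalIntegrable_rpow' (a := 0) (b := 1) hβ).comp_add_left 1
    simpa using this
  have e2 : IntervalIntegrable (fun x : ℝ => (1 - x) ^ α) MeasureTheory.volume 0 1 := by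
    have := (intervalIntegral.intervalIntegrable_rpow' (a := 0) (b := 1) hα).comp_sub_left 1
    simpa using this.symm
  refine IntervalIntegrable.trans (b := 0) ?_ ?_
  · unfold jacW
    refine e1.continuousOn_mul (g := fun x : ℝ => (1 - x) ^ α) ?_
    intro x hx
    rw [Set.uIcc_of_le (by norm_num)] at hx
    apply ContinuousAt.continuousWithinAt
    refine ContinuousAt.rpow_const (by fun_prop) (Or.inl ?_)
    linarith [hx.2]
  · unfold jacW
    refine e2.mul_continuousOn (g := fun x : ℝ => (1 + x) ^ β) ?_
    intro x hx
    rw [Set.uIcc_of_le (by norm_num)] at hx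
    apply ContinuousAt.continuousWithinAt
    refine ContinuousAt.rpow_const (by fun_prop) (Or.inl ?_)
    linarith [hx.1]

lemma jac_int (α β : ℝ) (hα : -1 < α) (hβ : -1 < β) (p : ℝ[X]) :
    IntervalIntegrable (fun x => p.eval x * jacW α β x) MeasureTheory.volume (-1) 1 :=
  (jacW_int α β hα hβ).continuousOn_mul p.continuous.continuousOn

/-- Integration against the Jacobi weight. -/
noncomputable def jacL (α β : ℝ) (hα : -1 < α) (hβ : -1 < β) : ℝ[X] →ₗ[ℝ] ℝ where
  toFun p := ∫ x in (-1 : ℝ)..1, p.eval x * jacW α β x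
  map_add' p q := by
    rw [← intervalIntegral.integral_add (jac_int α β hα hβ p) (jac_int α β hα hβ q)]
    congr 1; ext x; rw [eval_add]; ring
  map_smul' c p := by
    rw [RingHom.id_apply, smul_eq_mul, ← intervalIntegral.integral_const_mul]
    congr 1; ext x; rw [eval_smul, smul_eq_mul]; ring

lemma jacW_pos (α β : ℝ) (x : ℝ) (hx : x ∈ Set.Ioo (-1 : ℝ) 1) : 0 < jacW α β x :=
  mul_pos (Real.rpow_pos_of_pos (by linarith [hx.2]) _) (Real.rpow_pos_of_pos (by linarith [hx.1]) _)

lemma jacL_pos (α β : ℝ) (hα : -1 < α) (hβ : -1 < β) (p : ℝ[X]) (hp : p ≠ 0)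
    (h : ∀ x ∈ Set.Ioo (-1 : ℝ) 1, 0 ≤ p.eval x) : 0 < jacL α β hα hβ p := by
  have hae : 0 ≤ᵐ[MeasureTheory.volume.restrict (Set.uIoc (-1 : ℝ) 1)]
      (fun x => p.eval x * jacW α β x) := by
    rw [EventuallyLE, Set.uIoc_of_le (by norm_num)]
    refine MeasureTheory.ae_restrict_of_ae_eq_of_ae_restrict MeasureTheory.Ioo_ae_eq_Ioc ?_
    rw [MeasureTheory.ae_restrict_iff' measurableSet_Ioo]
    filter_upwards with x hx using mul_nonneg (h x hx) (jacW_pos α β x hx).le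
  refine (intervalIntegral.integral_pos_iff_support_of_nonneg_ae' hae
    (jac_int α β hα hβ p)).2 ⟨by norm_num, ?_⟩
  have hsub : Set.Ioo (-1 : ℝ) 1 \ (p.roots.toFinset : Set ℝ) ⊆
      Function.support (fun x => p.eval x * jacW α β x) ∩ Set.Ioc (-1) 1 := by
    intro x hx
    refine ⟨?_, Set.Ioo_subset_Ioc_self hx.1⟩
    rw [Function.mem_support]
    refine mul_ne_zero ?_ (jacW_pos α β x hx.1).ne'
    intro h0
    apply hx.2
    simpa [hp] using h0
  refine lt_of_lt_of_le ?_ (MeasureTheory.measure_mono hsub)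
  rw [MeasureTheory.measure_sdiff_null (Finset.measure_zero _ _)]
  simp

lemma beta01 (u v : ℝ) (hu : 0 < u) (hv : 0 < v) :
    ∫ t in (0:ℝ)..1, t ^ (u - 1) * (1 - t) ^ (v - 1) =
      Real.Gamma u * Real.Gamma v / Real.Gamma (u + v) := by
  have h := ProbabilityTheory.beta_eq_betaIntegralReal u v hu hv
  unfold ProbabilityTheory.beta at h
  rw [h, Complex.betaIntegral]
  have : (∫ x in (0:ℝ)..1, (x : ℂ) ^ ((u : ℂ) - 1) * (1 - (x : ℂ)) ^ ((v : ℂ) - 1)) =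
      ∫ x in (0:ℝ)..1, ((x ^ (u - 1) * (1 - x) ^ (v - 1) : ℝ) : ℂ) := by
    apply intervalIntegral.integral_congr
    intro x hx
    rw [Set.uIcc_of_le (by norm_num)] at hx
    simp only
    rw [Complex.ofReal_mul, Complex.ofReal_cpow hx.1, Complex.ofReal_cpow (by linarith [hx.2])]
    push_cast
    rfl
  rw [this, intervalIntegral.integral_ofReal, Complex.ofReal_re]

lemma jacL_moment (α β : ℝ) (hα : -1 < α) (hβ : -1 < β) (k m : ℕ) :
    jacL α β hα hβ ((1 - X) ^ k * (1 + X) ^ m) =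
      2 ^ (α + β + 1) * 2 ^ (k + m) * (Real.Gamma (β + m + 1) * Real.Gamma (α + k + 1) /
        Real.Gamma (α + β + (k + m : ℕ) + 2)) := by
  have hk : (0:ℝ) ≤ k := Nat.cast_nonneg k
  have hm : (0:ℝ) ≤ m := Nat.cast_nonneg m
  have hb := beta01 (β + m + 1) (α + k + 1) (by linarith) (by linarith)
  have h1 : β + m + 1 + (α + k + 1) = α + β + (k + m : ℕ) + 2 := by push_cast; ring
  rw [h1] at hb
  rw [← hb]
  show (∫ x in (-1 : ℝ)..1, ((1 - X) ^ k * (1 + X) ^ m : ℝ[X]).eval x * jacW α β x) = _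
  have hs := intervalIntegral.integral_comp_mul_sub (a := 0) (b := 1)
    (fun x => ((1 - X) ^ k * (1 + X) ^ m : ℝ[X]).eval x * jacW α β x) (c := 2) (by norm_num) 1
  norm_num at hs
  have hs2 : (∫ x in (-1 : ℝ)..1, ((1 - X) ^ k * (1 + X) ^ m : ℝ[X]).eval x * jacW α β x) =
    2 * ∫ x in (0:ℝ)..1, ((1 - (2 * x - 1)) ^ k * (2 * x) ^ m) * jacW α β (2 * x - 1) := by
    rw [hs]; simp
  rw [hs2, ← intervalIntegral.integral_const_mul, ← intervalIntegral.integral_const_mul]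
  rw [intervalIntegral.integral_of_le (by norm_num), intervalIntegral.integral_of_le (by norm_num),
    MeasureTheory.integral_Ioc_eq_integral_Ioo, MeasureTheory.integral_Ioc_eq_integral_Ioo]
  apply MeasureTheory.setIntegral_congr_fun measurableSet_Ioo
  intro t ht
  have ht0 : 0 < t := ht.1
  have ht1 : 0 < 1 - t := by linarith [ht.2]
  simp only [jacW]
  have e1 : 1 - (2 * t - 1) = 2 * (1 - t) := by ring
  have e2 : 1 + (2 * t - 1) = 2 * t := by ring
  have e3 : β + m + 1 - 1 = β + m := by ring
  have e4 : α + k + 1 - 1 = α + k := by ring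
  rw [e1, e2, e3, e4, Real.mul_rpow (by norm_num) ht1.le, Real.mul_rpow (by norm_num) ht0.le,
    Real.rpow_add ht0, Real.rpow_add ht1, Real.rpow_natCast, Real.rpow_natCast,
    Real.rpow_add (by norm_num), Real.rpow_add (by norm_num), Real.rpow_one, mul_pow, mul_pow,
    pow_add]
  ring

lemma gamma_poch (z : ℝ) (hz : 0 < z) (m : ℕ) :
    Real.Gamma (z + m) = Real.Gamma z * (ascPochhammer ℝ m).eval z := by
  induction m with
  | zero => simp
  | succ m ih =>
    have : z + (m + 1 : ℕ) = (z + m) + 1 := by push_cast; ring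
    rw [this, Real.Gamma_add_one (by positivity), ih, ascPochhammer_succ_right]
    simp
    ring

lemma alt_sum (n m : ℕ) (hmn : m < n) (z : ℝ) :
    ∑ k ∈ Finset.range (n + 1), (-1 : ℝ) ^ k / ((n - k).factorial * k.factorial) *
      (ascPochhammer ℝ m).eval ((n - k : ℕ) + z) = 0 := by
  have h := congrFun (Polynomial.fwdDiff_iter_eq_zero_of_degree_lt (R := ℝ)
    (P := ascPochhammer ℝ m) (n := n) (by rw [ascPochhammer_natDegree]; exact hmn)) z
  rw [fwdDiff_iter_eq_sum_shift, ← Finset.sum_range_reflect] at h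
  have h2 : ∑ k ∈ Finset.range (n + 1), (n.factorial : ℝ)⁻¹ * (((-1 : ℤ) ^ (n - (n + 1 - 1 - k)) *
      (n.choose (n + 1 - 1 - k) : ℤ)) •
      (ascPochhammer ℝ m).eval (z + (n + 1 - 1 - k) • (1:ℝ))) = 0 := by
    rw [← Finset.mul_sum, h]; simp
  rw [← h2]
  apply Finset.sum_congr rfl
  intro k hk
  have hk' : k ≤ n := by simpa [Nat.lt_succ_iff] using hk
  have e1 : n - (n + 1 - 1 - k) = k := by omega
  have e2 : n + 1 - 1 - k = n - k := by omega
  rw [e1, e2, Nat.choose_symm hk', zsmul_eq_mul, nsmul_eq_mul, mul_one, add_comm z]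
  push_cast
  rw [Nat.cast_choose ℝ hk']
  have := Nat.factorial_ne_zero n
  field_simp

lemma jac_ortho_basis (α β : ℝ) (hα : -1 < α) (hβ : -1 < β) (n m : ℕ) (hmn : m < n) :
    jacL α β hα hβ (jacobiP α β n * (1 + X) ^ m) = 0 := by
  have hexp : jacobiP α β n * (1 + X) ^ m = ∑ k ∈ Finset.range (n + 1),
      (((Real.Gamma (n + α + 1) / (Real.Gamma ((n : ℝ) - k + 1) * Real.Gamma (α + k + 1)) *
        (Real.Gamma (n + β + 1) / (Real.Gamma ((k : ℝ) + 1) * Real.Gamma ((n : ℝ) - k + β + 1))))) *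
        ((-1) ^ k * 2⁻¹ ^ n)) • ((1 - X) ^ k * (1 + X) ^ (n - k + m) : ℝ[X]) := by
    unfold jacobiP
    rw [Finset.sum_mul]
    apply Finset.sum_congr rfl
    intro k hk
    have hk' : k ≤ n := by simpa [Nat.lt_succ_iff] using hk
    rw [smul_eq_C_mul, C_mul (a := _ * _)]
    have e : (C ((-1) ^ k * 2⁻¹ ^ n) : ℝ[X]) = (-1) ^ k * C 2⁻¹ ^ k * C 2⁻¹ ^ (n - k) := by
      rw [mul_assoc, ← pow_add, Nat.add_sub_cancel' hk', C_mul, C_pow, C_pow, C_neg, C_1]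
    have e2 : (1 - X : ℝ[X]) = -1 * (X - 1) := by ring
    have e3 : ((-1 : ℝ[X]) ^ k) * (-1) ^ k = 1 := by rw [← mul_pow]; simp
    rw [e, e2, mul_pow, mul_pow, mul_pow, pow_add, add_comm X 1]
    linear_combination (-(C (Real.Gamma (n + α + 1) /
      (Real.Gamma ((n : ℝ) - k + 1) * Real.Gamma (α + k + 1)) *
        (Real.Gamma (n + β + 1) / (Real.Gamma ((k : ℝ) + 1) * Real.Gamma ((n : ℝ) - k + β + 1)))))
      * C 2⁻¹ ^ k * C 2⁻¹ ^ (n - k) * (X - 1) ^ k * ((1 + X) ^ (n - k) * (1 + X) ^ m)) * e3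
  rw [hexp, map_sum]
  have hsum := alt_sum n m hmn (β + 1)
  have : ∀ k ∈ Finset.range (n + 1), jacL α β hα hβ
      ((((Real.Gamma (n + α + 1) / (Real.Gamma ((n : ℝ) - k + 1) * Real.Gamma (α + k + 1)) *
        (Real.Gamma (n + β + 1) / (Real.Gamma ((k : ℝ) + 1) * Real.Gamma ((n : ℝ) - k + β + 1))))) *
        ((-1) ^ k * 2⁻¹ ^ n)) • ((1 - X) ^ k * (1 + X) ^ (n - k + m) : ℝ[X])) =
      (Real.Gamma (n + α + 1) * Real.Gamma (n + β + 1) * 2⁻¹ ^ n * 2 ^ (α + β + 1) * 2 ^ (n + m) /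
        Real.Gamma (α + β + (n + m : ℕ) + 2)) *
      ((-1 : ℝ) ^ k / ((n - k).factorial * k.factorial) *
      (ascPochhammer ℝ m).eval ((n - k : ℕ) + (β + 1))) := by
    intro k hk
    have hk' : k ≤ n := by simpa [Nat.lt_succ_iff] using hk
    have e0 : k + (n - k + m) = n + m := by omega
    rw [map_smul, smul_eq_mul, jacL_moment, e0]
    have hz : 0 < ((n - k : ℕ) : ℝ) + (β + 1) := by
      have : (0:ℝ) ≤ (n - k : ℕ) := Nat.cast_nonneg _
      linarith
    have e1 : β + ((n - k + m : ℕ) : ℝ) + 1 = ((n - k : ℕ) : ℝ) + (β + 1) + m := by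
      push_cast; ring
    have e2 : (n : ℝ) - k + β + 1 = ((n - k : ℕ) : ℝ) + (β + 1) := by
      rw [Nat.cast_sub hk']; ring
    rw [e1, gamma_poch _ hz, e2, ← Nat.cast_sub hk', Real.Gamma_nat_eq_factorial,
      Real.Gamma_nat_eq_factorial]
    have g1 := (Real.Gamma_pos_of_pos hz).ne'
    have g2 : Real.Gamma (α + k + 1) ≠ 0 := by
      refine (Real.Gamma_pos_of_pos ?_).ne'
      have : (0:ℝ) ≤ k := Nat.cast_nonneg _
      linarith
    have g3 : Real.Gamma (α + β + (n + m : ℕ) + 2) ≠ 0 := by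
      refine (Real.Gamma_pos_of_pos ?_).ne'
      have : (0:ℝ) ≤ (n + m : ℕ) := Nat.cast_nonneg _
      linarith
    have := Nat.factorial_ne_zero k
    have := Nat.factorial_ne_zero (n - k)
    generalize Real.Gamma (α + β + (n + m : ℕ) + 2) = G3 at *
    generalize Real.Gamma (α + k + 1) = G2 at *
    generalize Real.Gamma (((n - k : ℕ) : ℝ) + (β + 1)) = G1 at *
    generalize (2:ℝ) ^ (α + β + 1) = G0 at *
    field_simp
  rw [Finset.sum_congr rfl this, ← Finset.mul_sum, hsum, mul_zero]

lemma jac_ortho (α β : ℝ) (hα : -1 < α) (hβ : -1 < β) (n : ℕ) (p : ℝ[X]) (hp : p.degree < n) :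
    jacL α β hα hβ (jacobiP α β n * p) = 0 := by
  rw [← sum_taylor_eq p (-1), Polynomial.sum, Finset.mul_sum, map_sum]
  apply Finset.sum_eq_zero
  intro m hm
  have hmn : m < n := by
    have h1 := le_degree_of_mem_supp m hm
    rw [degree_taylor] at h1
    exact_mod_cast lt_of_le_of_lt h1 hp
  have h := jac_ortho_basis α β hα hβ n m hmn
  have e : jacobiP α β n * (C ((taylor (-1) p).coeff m) * (X - C (-1)) ^ m) =
      ((taylor (-1) p).coeff m) • (jacobiP α β n * (1 + X) ^ m) := by
    rw [smul_eq_C_mul]; simp; ring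
  rw [e, map_smul, h, smul_zero]

lemma jac_degree_le (α β : ℝ) (n : ℕ) : (jacobiP α β n).natDegree ≤ n := by
  unfold jacobiP
  apply natDegree_sum_le_of_forall_le
  intro k hk
  have hk' : k ≤ n := by simpa [Nat.lt_succ_iff] using hk
  rw [mul_assoc]
  refine (natDegree_C_mul_le _ _).trans (natDegree_mul_le.trans ?_)
  have h1 : ((C (2⁻¹ : ℝ) * (X - 1)) ^ k).natDegree ≤ k := by
    refine natDegree_pow_le.trans ?_
    have : (C (2⁻¹ : ℝ) * (X - 1)).natDegree ≤ 1 := by compute_degree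
    nlinarith
  have h2 : ((C (2⁻¹ : ℝ) * (X + 1)) ^ (n - k)).natDegree ≤ n - k := by
    refine natDegree_pow_le.trans ?_
    have : (C (2⁻¹ : ℝ) * (X + 1)).natDegree ≤ 1 := by compute_degree
    nlinarith
  omega

lemma jac_coeff (α β : ℝ) (hα : -1 < α) (hβ : -1 < β) (n : ℕ) :
    0 < (jacobiP α β n).coeff n := by
  unfold jacobiP
  rw [finsetSum_coeff]
  apply Finset.sum_pos
  · intro k hk
    have hk' : k ≤ n := by simpa [Nat.lt_succ_iff] using hk
    have hkr : (k : ℝ) ≤ n := by exact_mod_cast hk'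
    have hk0 : (0 : ℝ) ≤ k := Nat.cast_nonneg k
    rw [mul_assoc, coeff_C_mul]
    have e : ((C (2⁻¹ : ℝ) * (X - 1)) ^ k * (C 2⁻¹ * (X + 1)) ^ (n - k)).coeff n =
        2⁻¹ ^ k * 2⁻¹ ^ (n - k) := by
      have m1 : ((X - 1 : ℝ[X]) ^ k * (X + 1) ^ (n - k)).Monic :=
        ((monic_X_sub_C (1:ℝ)).pow k).mul ((monic_X_add_C (1:ℝ)).pow (n - k))
      have d1 : ((X - 1 : ℝ[X]) ^ k * (X + 1) ^ (n - k)).natDegree = n := by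
        rw [← C_1, ((monic_X_sub_C (1:ℝ)).pow k).natDegree_mul ((monic_X_add_C (1:ℝ)).pow (n - k)),
          natDegree_pow, natDegree_pow, natDegree_X_sub_C, natDegree_X_add_C]
        omega
      have e' : (C (2⁻¹ : ℝ) * (X - 1)) ^ k * (C 2⁻¹ * (X + 1)) ^ (n - k) =
          C (2⁻¹ ^ k * 2⁻¹ ^ (n - k)) * ((X - 1) ^ k * (X + 1) ^ (n - k)) := by
        rw [mul_pow, mul_pow, C_mul, C_pow, C_pow]; ring
      rw [e', coeff_C_mul]
      have := m1.coeff_natDegree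
      rw [d1] at this
      rw [this, mul_one]
    rw [e]
    have g1 := Real.Gamma_pos_of_pos (s := n + α + 1) (by linarith)
    have g2 := Real.Gamma_pos_of_pos (s := (n : ℝ) - k + 1) (by linarith)
    have g3 := Real.Gamma_pos_of_pos (s := α + k + 1) (by linarith)
    have g4 := Real.Gamma_pos_of_pos (s := n + β + 1) (by linarith)
    have g5 := Real.Gamma_pos_of_pos (s := (k : ℝ) + 1) (by linarith)
    have g6 := Real.Gamma_pos_of_pos (s := (n : ℝ) - k + β + 1) (by linarith)
    positivity
  · simp

lemma jac_natDegree (α β : ℝ) (hα : -1 < α) (hβ : -1 < β) (n : ℕ) :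
    (jacobiP α β n).natDegree = n :=
  le_antisymm (jac_degree_le α β n) (le_natDegree_of_ne_zero (jac_coeff α β hα hβ n).ne')

lemma jac_ne_zero (α β : ℝ) (hα : -1 < α) (hβ : -1 < β) (n : ℕ) : jacobiP α β n ≠ 0 := by
  intro h
  have := jac_coeff α β hα hβ n
  rw [h] at this
  simp at this

lemma jac_degree (α β : ℝ) (hα : -1 < α) (hβ : -1 < β) (n : ℕ) :
    (jacobiP α β n).degree = n := by
  rw [degree_eq_natDegree (jac_ne_zero α β hα hβ n), jac_natDegree α β hα hβ n]

lemma jac_norm (α β : ℝ) (hα : -1 < α) (hβ : -1 < β) (n : ℕ) :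
    jacL α β hα hβ (jacobiP α β n * jacobiP α β n) = jacobiNormSq α β n := by
  unfold jacobiNormSq
  show (∫ x in (-1 : ℝ)..1, (jacobiP α β n * jacobiP α β n).eval x * jacW α β x) = _
  congr 1; ext x; rw [eval_mul, jacW]; ring

lemma jac_norm_pos (α β : ℝ) (hα : -1 < α) (hβ : -1 < β) (n : ℕ) : 0 < jacobiNormSq α β n := by
  rw [← jac_norm α β hα hβ]
  refine jacL_pos α β hα hβ _ (mul_self_ne_zero.2 (jac_ne_zero α β hα hβ n)) ?_
  intro x _
  rw [eval_mul]
  exact mul_self_nonneg _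

lemma jac_ortho2 (α β : ℝ) (hα : -1 < α) (hβ : -1 < β) (i k : ℕ) (h : i ≠ k) :
    jacL α β hα hβ (jacobiP α β i * jacobiP α β k) = 0 := by
  rcases lt_or_gt_of_ne h with h | h
  · rw [mul_comm]
    apply jac_ortho
    rw [jac_degree α β hα hβ]
    exact_mod_cast h
  · apply jac_ortho
    rw [jac_degree α β hα hβ]
    exact_mod_cast h

lemma kern_jac (α β : ℝ) (hα : -1 < α) (hβ : -1 < β) (j N k : ℕ) (hk : k ≤ N) :
    jacL α β hα hβ (kernKPoly α β j N * jacobiP α β k) =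
      (derivative^[j] (jacobiP α β k)).eval 1 := by
  unfold kernKPoly
  rw [Finset.sum_mul, map_sum, Finset.sum_eq_single k]
  · rw [mul_assoc, ← smul_eq_C_mul, map_smul, jac_norm, smul_eq_mul,
      div_mul_cancel₀ _ (jac_norm_pos α β hα hβ k).ne']
  · intro i _ hik
    rw [mul_assoc, ← smul_eq_C_mul, map_smul, jac_ortho2 α β hα hβ i k hik, smul_zero]
  · intro h
    exact absurd (Finset.mem_range.2 (Nat.lt_succ_of_le hk)) h

lemma kern_repr (α β : ℝ) (hα : -1 < α) (hβ : -1 < β) (j N d : ℕ) (hd : d ≤ N + 1) :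
    ∀ p : ℝ[X], p.degree < d →
    jacL α β hα hβ (kernKPoly α β j N * p) = (derivative^[j] p).eval 1 := by
  induction d with
  | zero =>
    intro p hp
    have : p = 0 := by
      rw [← degree_eq_bot]
      simpa using hp
    subst this
    simp
  | succ d ih =>
    intro p hp
    set c := p.coeff d / (jacobiP α β d).coeff d with hc
    have hq : (p - C c * jacobiP α β d).degree < d := by
      rw [degree_lt_iff_coeff_zero]
      intro m hm
      rw [coeff_sub, coeff_C_mul]
      rcases hm.eq_or_lt with rfl | hm
      · rw [hc, div_mul_cancel₀ _ (jac_coeff α β hα hβ d).ne', sub_self]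
      · rw [coeff_eq_zero_of_natDegree_lt (p := jacobiP α β d)
            (by rw [jac_natDegree α β hα hβ]; exact hm),
          (degree_lt_iff_coeff_zero p (d + 1)).1 hp m hm]
        simp
    have h1 := ih (by omega) _ hq
    have h2 := kern_jac α β hα hβ j N d (by omega)
    have e : kernKPoly α β j N * p = kernKPoly α β j N * (p - C c * jacobiP α β d) +
        c • (kernKPoly α β j N * jacobiP α β d) := by rw [smul_eq_C_mul]; ring
    rw [e, map_add, h1, map_smul, h2, iterate_derivative_sub, iterate_derivative_C_mul]
    simp

lemma kern_degree (α β : ℝ) (hα : -1 < α) (hβ : -1 < β) (j N : ℕ) :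
    (kernKPoly α β j N).degree < (N + 1 : ℕ) := by
  rw [degree_lt_iff_coeff_zero]
  intro m hm
  unfold kernKPoly
  rw [finsetSum_coeff]
  apply Finset.sum_eq_zero
  intro i hi
  have hi' := Finset.mem_range.1 hi
  rw [coeff_C_mul, coeff_eq_zero_of_natDegree_lt
    (by rw [jac_natDegree α β hα hβ]; omega), mul_zero]

/-- `Q_n` has `n` real simple zeros, at most one of which lies
outside `[-1,1]`. -/
theorem sobQ_zeros_real_simple (α β : ℝ) (hα : -1 < α) (hβ : -1 < β) (j : ℕ)
    (Ms : ℕ → ℝ) (hMs : ∀ n, 0 ≤ Ms n) (n : ℕ) (hn : 1 ≤ n) :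
    Multiset.card (sobQ α β j Ms n).roots = n ∧
      (sobQ α β j Ms n).roots.Nodup ∧
      Multiset.card ((sobQ α β j Ms n).roots.filter (fun x => x < -1 ∨ 1 < x)) ≤ 1 := by
  obtain ⟨c, hc⟩ : ∃ c : ℝ, sobQ α β j Ms n =
      jacobiP α β n - C c * kernKPoly α β j (n - 1) := ⟨_, rfl⟩
  have hn1 : n - 1 + 1 = n := Nat.sub_add_cancel hn
  have hdk := kern_degree α β hα hβ j (n - 1)
  rw [hn1] at hdk
  have hdQ : (sobQ α β j Ms n).degree = n := by
    rw [hc, degree_sub_eq_left_of_degree_lt, jac_degree α β hα hβ]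
    rw [jac_degree α β hα hβ, ← smul_eq_C_mul]
    exact (degree_smul_le _ _).trans_lt hdk
  have hQ0 : sobQ α β j Ms n ≠ 0 := by
    intro h
    rw [h] at hdQ
    simp at hdQ
  refine zeros_abstract (jacL α β hα hβ) (jacL_pos α β hα hβ) n hn j _ hQ0
    (natDegree_eq_of_degree_eq_some hdQ) ?_
  intro p hp hj
  have hpd : p.degree < n := lt_of_le_of_lt degree_le_natDegree (by exact_mod_cast hp)
  have e : sobQ α β j Ms n * p =
      jacobiP α β n * p - c • (kernKPoly α β j (n - 1) * p) := by
    rw [hc, smul_eq_C_mul]; ring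
  rw [e, map_sub, map_smul, jac_ortho α β hα hβ n p hpd,
    kern_repr α β hα hβ j (n - 1) n hn1.ge p hpd, hj]
  simp
end
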